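/- Let S be an infinite set of natural numbers, each at least 5. Then there is no algorithm that, given a finite presentation, decides whether or not the group presented has a quotient isomorphic to the alternating group Alt(n) for some n ∈ S. Formally: the predicate on encoded finite presentations (s, L) given by '∃ n ∈ S, there exists a surjective group homomorphism from the presented group P(s,L) onto Alt(n)' is not a computable predicate (¬ ComputablePred). -/

import Mathlib

/-- The codes for each number of generators form a denumerable type. -/
instance (s : ℕ) : Denumerable (List (List (Fin s × Bool))) :=
  Denumerable.ofEncodableOfInfinite _

/-- The group presented by a finite presentation encoded as `(s, L)`, where `s` is the number
of generators and each entry of `L` is a word in the generators and their inverses. -/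
def presentedGroupOf (p : Σ s : ℕ, List (List (Fin s × Bool))) : Type :=
  PresentedGroup {x : FreeGroup (Fin p.1) | ∃ w ∈ p.2, x = FreeGroup.mk w}

instance (p : Σ s : ℕ, List (List (Fin s × Bool))) : Group (presentedGroupOf p) := by
  unfold presentedGroupOf; infer_instance


namespace AltUndec

section Progs

inductive Prog (ι : Type) : Type
  | skip : Prog ι
  | inc : ι → Prog ι
  | seq : Prog ι → Prog ι → Prog ι
  | loop : ι → Prog ι → Prog ι

/-- `loop r P` means: while `r` is nonzero, decrease `r` and run `P`. -/
inductive Runs {ι : Type} [DecidableEq ι] : Prog ι → (ι → ℕ) → (ι → ℕ) → Prop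
  | skip (ρ) : Runs .skip ρ ρ
  | inc (r ρ) : Runs (.inc r) ρ (Function.update ρ r (ρ r + 1))
  | seq {P Q ρ ρ' ρ''} : Runs P ρ ρ' → Runs Q ρ' ρ'' → Runs (.seq P Q) ρ ρ''
  | loop_zero {r P ρ} : ρ r = 0 → Runs (.loop r P) ρ ρ
  | loop_succ {r P ρ ρ' ρ''} : ρ r ≠ 0 → Runs P (Function.update ρ r (ρ r - 1)) ρ' →
      Runs (.loop r P) ρ' ρ'' → Runs (.loop r P) ρ ρ''

open Function

theorem Runs.of_eq {ι : Type} [DecidableEq ι] {P : Prog ι} {ρ ρ' σ} (h : Runs P ρ σ) (e : σ = ρ') :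
    Runs P ρ ρ' := e ▸ h

theorem Runs.of_eq' {ι : Type} [DecidableEq ι] {P : Prog ι} {ρ ρ' σ} (h : Runs P σ ρ') (e : σ = ρ) :
    Runs P ρ ρ' := e ▸ h

theorem Runs.loop_iter {ι : Type} [DecidableEq ι] {P : Prog ι} {r : ι} (N : ℕ) (σ : ℕ → ι → ℕ)
    (h : ∀ k < N, σ k r ≠ 0 ∧ Runs P (update (σ k) r (σ k r - 1)) (σ (k + 1))) (h0 : σ N r = 0) :
    Runs (.loop r P) (σ 0) (σ N) := by
  induction N generalizing σ with
  | zero => exact .loop_zero h0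
  | succ N ih =>
    refine .loop_succ (h 0 (by omega)).1 (h 0 (by omega)).2 ?_
    exact ih (fun k => σ (k + 1)) (fun k hk => h (k + 1) (by omega)) h0

abbrev NP := Prog ℕ

def pClear (r : ℕ) : NP := .loop r .skip

theorem runs_clear (r : ℕ) (ρ) : Runs (pClear r) ρ (update ρ r 0) := by
  have := Runs.loop_iter (P := .skip) (r := r) (ρ r) (fun k => update ρ r (ρ r - k)) ?_ ?_
  · simpa [pClear] using this
  · intro k hk
    refine ⟨by simp; omega, ?_⟩
    refine (Runs.skip _).of_eq ?_
    simp [Nat.sub_sub]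
  · simp

def pMove (a b : ℕ) : NP := .loop a (.inc b)

theorem runs_move (a b : ℕ) (hab : a ≠ b) (ρ) :
    Runs (pMove a b) ρ (update (update ρ a 0) b (ρ b + ρ a)) := by
  have := Runs.loop_iter (P := .inc b) (r := a) (ρ a)
    (fun k => update (update ρ a (ρ a - k)) b (ρ b + k)) ?_ ?_
  · simpa [pMove] using this
  · intro k hk
    refine ⟨by simp [hab]; omega, ?_⟩
    refine (Runs.inc _ _).of_eq ?_
    funext j
    simp only [update_apply]
    grind
  · simp [hab]

def pCopy (a o t : ℕ) : NP := .seq (.loop a (.seq (.inc o) (.inc t))) (pMove t a)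

theorem runs_copy (a o t : ℕ) (h1 : a ≠ o) (h2 : a ≠ t) (h3 : o ≠ t) (ρ : ℕ → ℕ) (ho : ρ o = 0)
    (ht : ρ t = 0) :
    Runs (pCopy a o t) ρ (update ρ o (ρ a)) := by
  have := Runs.loop_iter (P := .seq (.inc o) (.inc t)) (r := a) (ρ a)
    (fun k => update (update (update ρ a (ρ a - k)) o k) t k) ?_ ?_
  · refine .seq (Runs.of_eq (ρ' := update (update (update ρ a 0) o (ρ a)) t (ρ a)) ?_ rfl)
      ((runs_move t a h2.symm _).of_eq ?_)
    · convert this using 1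
      · funext j
        simp only [update_apply]
        grind
      · simp
    · funext j
      simp only [update_apply]
      grind
  · intro k hk
    refine ⟨by simp [update_apply]; grind, ?_⟩
    refine (Runs.seq (Runs.inc _ _) (Runs.inc _ _)).of_eq ?_
    funext j
    simp only [update_apply]
    grind
  · simp only [update_apply]; grind

def Cmp {n : ℕ} (f : List.Vector ℕ n →. ℕ) : Prop :=
  ∀ (ι : Fin n → ℕ) (o B : ℕ), (∀ i, ι i < B) → o < B → (∀ i, ι i ≠ o) →
    ∃ P : NP, ∀ ρ, (∀ j, B ≤ j → ρ j = 0) → ρ o = 0 →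
      ∀ y ∈ f (List.Vector.ofFn fun i => ρ (ι i)), Runs P ρ (update ρ o y)

theorem cmp_seq {m n : ℕ} {g : Fin n → List.Vector ℕ m →. ℕ} (hg : ∀ i, Cmp (g i))
    (ι : Fin m → ℕ) (B : ℕ) (hι : ∀ i, ι i < B) (k : ℕ) (hk : k ≤ n) :
    ∃ P : NP, ∀ ρ, (∀ j, B ≤ j → ρ j = 0) →
      ∀ y : Fin n → ℕ, (∀ i, y i ∈ g i (List.Vector.ofFn fun i => ρ (ι i))) →
      Runs P ρ (fun j => if h : B ≤ j ∧ j < B + k then y ⟨j - B, by omega⟩ else ρ j) := by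
  induction k with
  | zero =>
    refine ⟨.skip, fun ρ _ y _ => (Runs.skip ρ).of_eq ?_⟩
    funext j
    rw [dif_neg]; omega
  | succ k ih =>
    obtain ⟨P, hP⟩ := ih (by omega)
    obtain ⟨Q, hQ⟩ := hg ⟨k, hk⟩ ι (B + k) (B + k + 1) (fun i => by have := hι i; omega) (by omega)
      (fun i => by have := hι i; omega)
    refine ⟨.seq P Q, fun ρ h0 y hy => .seq (hP ρ h0 y hy) ((hQ _ ?_ ?_ (y ⟨k, hk⟩) ?_).of_eq ?_)⟩
    · intro j hj
      rw [dif_neg (by omega)]; exact h0 j (by omega)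
    · rw [dif_neg (by omega)]; exact h0 _ (by omega)
    · convert hy ⟨k, hk⟩ using 4 with i
      rw [dif_neg]
      have := hι i; omega
    · funext j
      simp only [update_apply]
      by_cases hj : j = B + k
      · subst hj
        simp
      · rw [if_neg hj]
        by_cases h : B ≤ j ∧ j < B + k
        · rw [dif_pos h, dif_pos (by omega)]
        · rw [dif_neg h, dif_neg (by omega)]

theorem clear_seq (B k : ℕ) : ∃ P : NP, ∀ ρ,
    Runs P ρ (fun j => if B ≤ j ∧ j < B + k then 0 else ρ j) := by
  induction k with
  | zero =>
    refine ⟨.skip, fun ρ => (Runs.skip ρ).of_eq ?_⟩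
    funext j
    rw [if_neg]; omega
  | succ k ih =>
    obtain ⟨P, hP⟩ := ih
    refine ⟨.seq P (pClear (B + k)), fun ρ => .seq (hP ρ) ((runs_clear _ _).of_eq ?_)⟩
    funext j
    simp only [update_apply]
    grind

theorem cmp_comp {m n : ℕ} {f : List.Vector ℕ n →. ℕ} {g : Fin n → List.Vector ℕ m →. ℕ}
    {h : List.Vector ℕ m →. ℕ} (hf : Cmp f) (hg : ∀ i, Cmp (g i))
    (H : ∀ v y, y ∈ h v → ∃ z : Fin n → ℕ, (∀ i, z i ∈ g i v) ∧ y ∈ f (List.Vector.ofFn z)) :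
    Cmp h := by
  intro ι o B hι ho hne
  obtain ⟨P, hP⟩ := cmp_seq hg ι B hι n le_rfl
  obtain ⟨Q, hQ⟩ := hf (fun i => B + i) o (B + n) (fun i => by omega) (by omega) (fun i => by omega)
  obtain ⟨R, hR⟩ := clear_seq B n
  refine ⟨.seq P (.seq Q R), fun ρ h0 h1 y hy => ?_⟩
  obtain ⟨z, hz, hz'⟩ := H _ _ hy
  refine .seq (hP ρ h0 z hz) (.seq (hQ _ ?_ ?_ y ?_) ((hR _).of_eq ?_))
  · intro j hj; rw [dif_neg (by omega)]; exact h0 j (by omega)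
  · rw [dif_neg (by omega)]; exact h1
  · convert hz' using 3 with i
    simp
  · funext j
    simp only [update_apply]
    have := h0 j
    grind

theorem ofFn_tail {n : ℕ} (z : Fin (n + 1) → ℕ) :
    (List.Vector.ofFn z).tail = List.Vector.ofFn (fun i => z i.succ) := by
  rfl

theorem cmp_prec {n : ℕ} {f : List.Vector ℕ n → ℕ} {g : List.Vector ℕ (n + 2) → ℕ}
    (hf : Cmp (n := n) (f : List.Vector ℕ n →. ℕ)) (hg : Cmp (n := n + 2) (g : List.Vector ℕ (n + 2) →. ℕ)) :
    Cmp (n := n + 1) ((fun v : List.Vector ℕ (n + 1) =>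
            v.head.rec (f v.tail) fun y IH => g (y ::ᵥ IH ::ᵥ v.tail) : List.Vector ℕ (n + 1) → ℕ) :
      List.Vector ℕ (n + 1) →. ℕ) := by
  intro ι o B hι ho hne
  obtain ⟨P, hP⟩ := hf (fun i => ι i.succ) o (B + 3) (fun i => by have := hι i.succ; omega) (by omega)
    (fun i => hne _)
  obtain ⟨Q, hQ⟩ := hg (Fin.cons (B + 1) (Fin.cons o fun i => ι i.succ)) (B + 2) (B + 3)
    (by
      refine Fin.cases ?_ (Fin.cases ?_ fun i => ?_)
      · simp
      · simp; omega
      · have := hι i.succ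
        simp; omega) (by omega)
    (by
      refine Fin.cases ?_ (Fin.cases ?_ fun i => ?_)
      · simp
      · simp; omega
      · have := hι i.succ
        simp; omega)
  refine ⟨.seq (pCopy (ι 0) B (B + 1)) (.seq P (.seq (.loop B (.seq Q (.seq (pClear o) (.seq (pMove (B + 2) o)
    (.inc (B + 1)))))) (pClear (B + 1)))), fun ρ h0 h1 y hy => ?_⟩
  have hι0 := hι 0
  simp only [PFun.coe_val, Part.mem_some_iff] at hy
  rw [ofFn_tail] at hy
  have hhead : (List.Vector.ofFn fun i => ρ (ι i)).head = ρ (ι 0) := rfl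
  rw [hhead] at hy
  set N := ρ (ι 0) with hN
  set w := List.Vector.ofFn fun i : Fin n => ρ (ι i.succ) with hw
  set val : ℕ → ℕ := fun k => Nat.rec (f w) (fun y IH => g (y ::ᵥ IH ::ᵥ w)) k with hval
  have hz0 := h0 B le_rfl
  have hz1 := h0 (B + 1) (by omega)
  have hz2 := h0 (B + 2) (by omega)
  refine .seq (runs_copy _ _ _ (by omega) (by omega) (by omega) _ hz0 hz1) ?_
  refine .seq (hP _ ?_ ?_ (val 0) ?_) ?_
  · intro j hj; rw [update_of_ne (by omega)]; exact h0 j (by omega)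
  · rw [update_of_ne (by omega)]; exact h1
  · have : (fun i : Fin n => update ρ B N (ι i.succ)) = fun i : Fin n => ρ (ι i.succ) := by
      funext i
      have := hι i.succ
      rw [update_of_ne (by omega)]
    simp only [← hN, this, PFun.coe_val, Part.mem_some_iff]
    rfl
  have L := Runs.loop_iter (P := .seq Q (.seq (pClear o) (.seq (pMove (B + 2) o)
    (.inc (B + 1))))) (r := B) N
    (fun k => update (update (update ρ B (N - k)) (B + 1) k) o (val k)) ?_ ?_
  · refine .seq (L.of_eq' ?_) ((runs_clear _ _).of_eq ?_)
    · funext j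
      simp only [update_apply]
      grind
    · subst hy
      funext j
      simp only [update_apply]
      grind
  · intro k hk
    refine ⟨by simp [update_apply]; grind, ?_⟩
    refine .seq (hQ _ ?_ ?_ (val (k + 1)) ?_) (.seq (runs_clear _ _) (.seq (runs_move _ _ (by omega) _)
      ((Runs.inc _ _).of_eq ?_)))
    · intro j hj
      simp only [update_apply]
      have := h0 j
      grind
    · simp only [update_apply]
      grind
    · simp only [PFun.coe_val, Part.mem_some_iff]
      change g (k ::ᵥ val k ::ᵥ w) = _
      congr 1
      apply List.Vector.ext
      intro i
      rw [List.Vector.get_ofFn]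
      refine Fin.cases ?_ (Fin.cases ?_ fun i => ?_) i
      · simp only [Fin.cons_zero, update_apply]
        simp; grind
      · simp only [Fin.cons_zero, Fin.cons_succ, update_apply, List.Vector.get_cons_succ,
          List.Vector.get_zero, List.Vector.head_cons]
        grind
      · have := hι i.succ
        have := hne i.succ
        simp only [Fin.cons_succ, update_apply, List.Vector.get_cons_succ, hw, List.Vector.get_ofFn]
        grind
    · funext j
      simp only [update_apply]
      grind
  · simp only [update_apply]; grind

theorem cmp_rfind {n : ℕ} {f : List.Vector ℕ (n + 1) → ℕ}
    (hf : Cmp (n := n + 1) (f : List.Vector ℕ (n + 1) →. ℕ)) :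
    Cmp (n := n) (fun v => Nat.rfind fun k => Part.some (decide (f (k ::ᵥ v) = 0))) := by
  intro ι o B hι ho hne
  obtain ⟨P, hP⟩ := hf (Fin.cons o ι) B (B + 1)
    (by
      refine Fin.cases ?_ fun i => ?_
      · simp; omega
      · have := hι i
        simp; omega) (by omega)
    (by
      refine Fin.cases ?_ fun i => ?_
      · simp; omega
      · have := hι i
        simp; omega)
  refine ⟨.seq P (.loop B (.seq (pClear B) (.seq (.inc o) P))), fun ρ h0 h1 y hy => ?_⟩
  set w := List.Vector.ofFn fun i : Fin n => ρ (ι i) with hw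
  have hz := h0 B le_rfl
  have key : ∀ k, Runs P (update ρ o k) (update (update ρ o k) B (f (k ::ᵥ w))) := by
    intro k
    refine hP _ ?_ ?_ _ ?_
    · intro j hj; rw [update_of_ne (by omega)]; exact h0 j (by omega)
    · rw [update_of_ne (by omega)]; exact hz
    · simp only [PFun.coe_val, Part.mem_some_iff]
      congr 1
      apply List.Vector.ext
      intro i
      rw [List.Vector.get_ofFn]
      refine Fin.cases ?_ (fun i => ?_) i
      · simp
      · have := hne i
        simp [hw, update_apply, this]
  have hy0 : f (y ::ᵥ w) = 0 := by
    have := Nat.rfind_spec hy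
    simpa using this
  have hyk : ∀ k < y, f (k ::ᵥ w) ≠ 0 := by
    intro k hk
    have := Nat.rfind_min hy hk
    simpa using this
  have L := Runs.loop_iter (P := .seq (pClear B) (.seq (.inc o) P)) (r := B) y
    (fun k => update (update ρ o k) B (f (k ::ᵥ w))) ?_ ?_
  · refine .seq ((key 0).of_eq' ?_) (L.of_eq ?_)
    · rw [← h1]; simp
    · rw [hy0]
      funext j
      simp only [update_apply]
      grind
  · intro k hk
    refine ⟨by simpa using hyk k hk, ?_⟩
    refine .seq (runs_clear _ _) (.seq (Runs.inc _ _) ((key (k + 1)).of_eq' ?_))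
    funext j
    simp only [update_apply]
    grind
  · simpa using hy0

theorem cmp_primrec {n : ℕ} {f : List.Vector ℕ n → ℕ} (hf : Nat.Primrec' f) :
    Cmp (f : List.Vector ℕ n →. ℕ) := by
  induction hf with
  | zero =>
    intro ι o B hι ho hne
    refine ⟨.skip, fun ρ h0 h1 y hy => (Runs.skip _).of_eq ?_⟩
    simp at hy
    subst hy
    rw [← h1]; simp
  | succ =>
    intro ι o B hι ho hne
    refine ⟨.seq (pCopy (ι 0) o B) (.inc o), fun ρ h0 h1 y hy => ?_⟩
    have := hι 0
    have := hne 0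
    refine .seq (runs_copy _ _ _ (by omega) (by omega) (by omega) _ h1 (h0 _ le_rfl))
      ((Runs.inc _ _).of_eq ?_)
    simp only [PFun.coe_val, Part.mem_some_iff] at hy
    subst hy
    simp
  | get i =>
    intro ι o B hι ho hne
    refine ⟨pCopy (ι i) o B, fun ρ h0 h1 y hy => ?_⟩
    have := hι i
    have := hne i
    refine (runs_copy _ _ _ (by omega) (by omega) (by omega) _ h1 (h0 _ le_rfl)).of_eq ?_
    simp only [PFun.coe_val, Part.mem_some_iff] at hy
    subst hy
    simp
  | comp g _ _ hf hg =>
    refine cmp_comp hf hg ?_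
    intro v y hy
    simp only [PFun.coe_val, Part.mem_some_iff] at hy ⊢
    exact ⟨_, fun i => rfl, hy⟩
  | prec _ _ hf hg => exact cmp_prec hf hg

theorem mem_mOfFn {n : ℕ} (g : Fin n → Part ℕ) (v : List.Vector ℕ n)
    (h : v ∈ List.Vector.mOfFn g) : ∀ i, v.get i ∈ g i := by
  induction n with
  | zero => intro i; exact i.elim0
  | succ n ih =>
    simp only [List.Vector.mOfFn, Part.bind_eq_bind, Part.mem_bind_iff, Part.pure_eq_some,
      Part.mem_some_iff] at h
    obtain ⟨a, ha, w, hw, rfl⟩ := h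
    refine Fin.cases ?_ fun i => ?_
    · simpa using ha
    · simpa using ih _ _ hw i

theorem cmp_partrec {n : ℕ} {f : List.Vector ℕ n →. ℕ} (hf : Nat.Partrec' f) : Cmp f := by
  induction hf with
  | prim h => exact cmp_primrec h
  | comp g _ _ hf hg =>
    refine cmp_comp hf hg ?_
    intro v y hy
    obtain ⟨w, hw, hy⟩ := Part.mem_bind_iff.1 hy
    exact ⟨w.get, mem_mOfFn _ _ hw, by simpa using hy⟩
  | rfind _ hf => exact cmp_rfind hf

end Progs

end AltUndec


namespace AltUndec

section Machine

open Function

def Prog.map {ι κ : Type} (f : ι → κ) : Prog ι → Prog κ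
  | .skip => .skip
  | .inc r => .inc (f r)
  | .seq P Q => .seq (P.map f) (Q.map f)
  | .loop r P => .loop (f r) (P.map f)

def Prog.bnd : Prog ℕ → ℕ
  | .skip => 0
  | .inc r => r
  | .seq P Q => max P.bnd Q.bnd
  | .loop r P => max r P.bnd

theorem update_restrict (R r n : ℕ) (hr : r ≤ R) (ρ : ℕ → ℕ) :
    (fun i : Fin (R + 1) => update ρ r n i) =
      update (fun i : Fin (R + 1) => ρ i) (Fin.ofNat (R + 1) r) n := by
  funext i
  simp only [update_apply]
  have : ((i : ℕ) = r) ↔ i = Fin.ofNat (R + 1) r := by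
    rw [Fin.ext_iff, Fin.val_ofNat, Nat.mod_eq_of_lt (by omega)]
  simp only [this]

theorem val_restrict (R r : ℕ) (hr : r ≤ R) :
    ((Fin.ofNat (R + 1) r : Fin (R + 1)) : ℕ) = r := by
  rw [Fin.val_ofNat, Nat.mod_eq_of_lt (by omega)]

theorem Runs.restrict {P : Prog ℕ} {ρ ρ'} (h : Runs P ρ ρ') (R : ℕ) (hR : P.bnd ≤ R) :
    Runs (P.map (Fin.ofNat (R + 1))) (fun i : Fin (R + 1) => ρ i) (fun i : Fin (R + 1) => ρ' i) := by
  induction h with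
  | skip => exact .skip _
  | inc r ρ =>
    rw [update_restrict R r _ hR]
    refine Runs.of_eq (.inc _ _) ?_
    rw [val_restrict R r hR]
  | seq _ _ h1 h2 =>
    simp only [Prog.bnd, sup_le_iff] at hR
    exact .seq (h1 hR.1) (h2 hR.2)
  | @loop_zero r P ρ h =>
    simp only [Prog.bnd, sup_le_iff] at hR
    refine .loop_zero ?_
    rw [val_restrict R r hR.1]; exact h
  | @loop_succ r P ρ ρ' ρ'' h _ _ h1 h2 =>
    have hR' := hR
    simp only [Prog.bnd, sup_le_iff] at hR
    refine .loop_succ ?_ ?_ (h2 hR')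
    · rw [val_restrict R r hR.1]; exact h
    · have := h1 hR.2
      rw [update_restrict R r _ hR.1] at this
      rw [val_restrict R r hR.1]
      exact this

inductive Instr (T ι : Type) : Type
  | jmp : T → Instr T ι
  | inc : ι → T → Instr T ι
  | dec : ι → T → T → Instr T ι
  | halt : Instr T ι

inductive MStep {T ι : Type} [DecidableEq ι] (δ : T → Instr T ι) : T × (ι → ℕ) → T × (ι → ℕ) → Prop
  | jmp {q q' ρ} : δ q = .jmp q' → MStep δ (q, ρ) (q', ρ)
  | inc {q q' r ρ} : δ q = .inc r q' → MStep δ (q, ρ) (q', update ρ r (ρ r + 1))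
  | decs {q q' q'' r ρ} : δ q = .dec r q' q'' → ρ r ≠ 0 → MStep δ (q, ρ) (q', update ρ r (ρ r - 1))
  | decz {q q' q'' r ρ} : δ q = .dec r q' q'' → ρ r = 0 → MStep δ (q, ρ) (q'', ρ)

def St {ι : Type} : Prog ι → Type
  | .skip => Unit
  | .inc _ => Unit
  | .seq P Q => St P ⊕ St Q
  | .loop _ P => Option (St P)

theorem St_finite {ι : Type} (P : Prog ι) : Finite (St P) := by
  induction P with
  | skip => exact inferInstanceAs (Finite Unit)
  | inc r => exact inferInstanceAs (Finite Unit)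
  | seq P Q h1 h2 => exact inferInstanceAs (Finite (St P ⊕ St Q))
  | loop r P h => exact inferInstanceAs (Finite (Option (St P)))

def entry {ι : Type} : (P : Prog ι) → St P
  | .skip => ()
  | .inc _ => ()
  | .seq P _ => Sum.inl (entry P)
  | .loop _ _ => none

def code {ι T : Type} : (P : Prog ι) → (emb : St P → T) → (exit : T) → St P → Instr T ι
  | .skip, _, exit, _ => .jmp exit
  | .inc r, _, exit, _ => .inc r exit
  | .seq P Q, emb, exit, s => Sum.casesOn (motive := fun _ => Instr T ι) s
      (fun a => code P (fun a => emb (Sum.inl a)) (emb (Sum.inr (entry Q))) a)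
      (fun b => code Q (fun a => emb (Sum.inr a)) exit b)
  | .loop r P, emb, exit, s => Option.casesOn (motive := fun _ => Instr T ι) s
      (.dec r (emb (some (entry P))) exit)
      (fun a => code P (fun a => emb (some a)) (emb none) a)

theorem sim {ι T : Type} [DecidableEq ι] (δ : T → Instr T ι) {P : Prog ι} {ρ ρ'} (h : Runs P ρ ρ') :
    ∀ (emb : St P → T) (exit : T), (∀ s, δ (emb s) = code P emb exit s) →
      Relation.ReflTransGen (MStep δ) (emb (entry P), ρ) (exit, ρ') := by
  induction h with
  | skip ρ => intro emb exit hs; exact .single (.jmp (hs ()))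
  | inc r ρ => intro emb exit hs; exact .single (.inc (hs ()))
  | seq _ _ h1 h2 =>
    intro emb exit hs
    exact (h1 _ _ fun s => hs (Sum.inl s)).trans (h2 _ _ fun s => hs (Sum.inr s))
  | loop_zero h => intro emb exit hs; exact .single (.decz (hs none) h)
  | loop_succ h _ _ h1 h2 =>
    intro emb exit hs
    refine .head (.decs (hs none) h) ?_
    exact (h1 _ _ fun s => hs (some s)).trans (h2 emb exit hs)

theorem exists_machine (f : ℕ →. ℕ) (hf : Nat.Partrec f) :
    ∃ (T : Type) (_ : Finite T) (R : ℕ) (δ : T → Instr T (Fin (R + 1))) (start acc rej : T),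
      acc ≠ rej ∧ δ acc = .halt ∧ δ rej = .halt ∧
      (∀ n, 0 ∈ f n → ∃ ρ, Relation.ReflTransGen (MStep δ) (start, Pi.single 0 n) (acc, ρ)) ∧
      (∀ n, 1 ∈ f n → ∃ ρ, Relation.ReflTransGen (MStep δ) (start, Pi.single 0 n) (rej, ρ)) := by
  have hf' : Nat.Partrec' (n := 1) fun v => f v.head :=
    Nat.Partrec'.part_iff₁.2 (Partrec.nat_iff.2 hf)
  obtain ⟨P, hP⟩ := cmp_partrec hf' (fun _ => 0) 1 2 (by simp) (by simp) (by simp)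
  let R := max 1 P.bnd
  let P' := P.map (Fin.ofNat (R + 1))
  let T := St P' ⊕ Fin 3
  have := St_finite P'
  let δ : T → Instr T (Fin (R + 1)) := fun t => Sum.casesOn t
    (fun s => code P' Sum.inl (Sum.inr 0) s)
    ![.dec (Fin.ofNat (R + 1) 1) (Sum.inr 1) (Sum.inr 2), .halt, .halt]
  have key : ∀ n, ∀ y ∈ f n, Relation.ReflTransGen (MStep δ) (Sum.inl (entry P'), Pi.single 0 n)
      (Sum.inr 0, fun i : Fin (R + 1) => (update (Pi.single (0 : ℕ) n) 1 y : ℕ → ℕ) i) := by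
    intro n y hy
    have h1 := hP (Pi.single 0 n) (by
      intro j hj
      rw [Pi.single_apply, if_neg (by omega)]) (by simp) y (by simpa using hy)
    have h2 := sim δ (h1.restrict R (by simp [R])) Sum.inl (Sum.inr 0) (fun s => rfl)
    convert h2 using 2
    funext i
    simp only [Pi.single_apply, Fin.ext_iff, Fin.val_zero]
  have hv := val_restrict R 1 (by simp [R])
  refine ⟨T, inferInstance, R, δ, Sum.inl (entry P'), Sum.inr 2, Sum.inr 1,
    fun h => absurd (Sum.inr.inj h) (by decide), rfl, rfl, ?_, ?_⟩
  · intro n hn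
    refine ⟨_, (key n 0 hn).tail (.decz rfl ?_)⟩
    rw [hv]; simp
  · intro n hn
    refine ⟨_, (key n 1 hn).tail (.decs rfl ?_)⟩
    rw [hv]; simp

end Machine

end AltUndec


namespace AltUndec

section Rewriting

open Function

inductive Ltr (T ι : Type) : Type
  | st : T → Ltr T ι
  | x : ι → Ltr T ι
  | b : ι → Ltr T ι
  | z : Ltr T ι

instance Ltr_finite {T ι : Type} [Finite T] [Finite ι] : Finite (Ltr T ι) := by
  let f : Ltr T ι → T ⊕ (ι ⊕ (ι ⊕ Unit)) := fun a => match a with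
    | .st q => .inl q
    | .x r => .inr (.inl r)
    | .b r => .inr (.inr (.inl r))
    | .z => .inr (.inr (.inr ()))
  refine Finite.of_injective f ?_
  intro a b h
  cases a <;> cases b <;> simp [f] at h <;> simp [h]

variable {T : Type} {R : ℕ}

abbrev LL (T : Type) (R : ℕ) := Ltr T (Fin (R + 1))

def trk : LL T R → Option (Fin (R + 1))
  | .st _ => none
  | .x r => some r
  | .b r => some r
  | .z => none

def isSt : LL T R → Prop
  | .st _ => True
  | _ => False

inductive Rule (δ : T → Instr T (Fin (R + 1))) : List (LL T R) → List (LL T R) → Prop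
  | jmp {q q'} : δ q = .jmp q' → Rule δ [.st q] [.st q', .z]
  | inc {q q' r} : δ q = .inc r q' → Rule δ [.st q] [.st q', .x r, .z]
  | decs {q q' q'' r} : δ q = .dec r q' q'' → Rule δ [.st q, .x r] [.st q', .z]
  | decz {q q' q'' r} : δ q = .dec r q' q'' → Rule δ [.st q, .b r] [.st q'', .b r, .z]
  | comm {a b} : ¬ isSt a → ¬ isSt b → trk a ≠ trk b → Rule δ [a, b] [b, a]

theorem rule_length {δ : T → Instr T (Fin (R + 1))} {l r} (h : Rule δ l r) :
    l.length ≤ 3 ∧ r.length ≤ 3 := by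
  cases h <;> simp

section Accept

variable {M : Type*} [Monoid M] {φ : LL T R → M} {δ : T → Instr T (Fin (R + 1))}

def valL (φ : LL T R → M) (l : List (Fin (R + 1))) (ρ : Fin (R + 1) → ℕ) : M :=
  (l.map fun r => φ (.x r) ^ ρ r * φ (.b r)).prod

theorem z_comm (hφ : ∀ l r, Rule δ l r → (l.map φ).prod = (r.map φ).prod) (l ρ) :
    Commute (φ .z) (valL φ l ρ) := by
  have c1 : ∀ r, Commute (φ .z) (φ (.x r)) := by
    intro r
    have := hφ [.z, .x r] [.x r, .z] (.comm (by simp [isSt]) (by simp [isSt]) (by simp [trk]))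
    simpa [Commute, SemiconjBy] using this
  have c2 : ∀ r, Commute (φ .z) (φ (.b r)) := by
    intro r
    have := hφ [.z, .b r] [.b r, .z] (.comm (by simp [isSt]) (by simp [isSt]) (by simp [trk]))
    simpa [Commute, SemiconjBy] using this
  refine Commute.list_prod_right _ _ ?_
  intro y hy
  obtain ⟨r, -, rfl⟩ := List.mem_map.1 hy
  exact ((c1 r).pow_right _).mul_right (c2 r)

theorem valL_update (hφ : ∀ l r, Rule δ l r → (l.map φ).prod = (r.map φ).prod) (l ρ) (r : Fin (R + 1))
    (hl : l.Nodup) (hr : r ∈ l) :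
    ∃ rest, ∀ n, valL φ l (update ρ r n) = φ (.x r) ^ n * (φ (.b r) * rest) := by
  induction l with
  | nil => simp at hr
  | cons s l ih =>
    rw [List.nodup_cons] at hl
    by_cases hs : s = r
    · subst hs
      refine ⟨valL φ l ρ, fun n => ?_⟩
      simp only [valL, List.map_cons, List.prod_cons, update_self, mul_assoc]
      congr 3
      refine List.map_congr_left fun t ht => ?_
      rw [update_of_ne]
      rintro rfl
      exact hl.1 ht
    · obtain ⟨rest, hrest⟩ := ih hl.2 (by
        rcases List.mem_cons.1 hr with h | h
        · exact absurd h.symm hs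
        · exact h)
      have hsr : some s ≠ some r := by simpa using hs
      have c1 : Commute (φ (.x s)) (φ (.x r)) := by
        have := hφ [.x s, .x r] [.x r, .x s] (.comm (by simp [isSt]) (by simp [isSt]) hsr)
        simpa [Commute, SemiconjBy] using this
      have c2 : Commute (φ (.x s)) (φ (.b r)) := by
        have := hφ [.x s, .b r] [.b r, .x s] (.comm (by simp [isSt]) (by simp [isSt]) hsr)
        simpa [Commute, SemiconjBy] using this
      have c3 : Commute (φ (.b s)) (φ (.x r)) := by
        have := hφ [.b s, .x r] [.x r, .b s] (.comm (by simp [isSt]) (by simp [isSt]) hsr)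
        simpa [Commute, SemiconjBy] using this
      have c4 : Commute (φ (.b s)) (φ (.b r)) := by
        have := hφ [.b s, .b r] [.b r, .b s] (.comm (by simp [isSt]) (by simp [isSt]) hsr)
        simpa [Commute, SemiconjBy] using this
      refine ⟨φ (.x s) ^ ρ s * φ (.b s) * rest, fun n => ?_⟩
      have hc : Commute (φ (.x s) ^ ρ s * φ (.b s)) (φ (.x r) ^ n * φ (.b r)) :=
        ((c1.pow_pow _ _).mul_right (c2.pow_left _)).mul_left ((c3.pow_right _).mul_right c4)
      have e := hrest n
      simp only [valL] at e ⊢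
      rw [List.map_cons, List.prod_cons, e, update_of_ne hs]
      calc φ (.x s) ^ ρ s * φ (.b s) * (φ (.x r) ^ n * (φ (.b r) * rest))
          = (φ (.x s) ^ ρ s * φ (.b s)) * (φ (.x r) ^ n * φ (.b r)) * rest := by
            simp only [mul_assoc]
        _ = _ := by rw [hc.eq]; simp only [mul_assoc]

theorem accept_step (hφ : ∀ l r, Rule δ l r → (l.map φ).prod = (r.map φ).prod)
    {c c' : T × (Fin (R + 1) → ℕ)} (h : MStep δ c c') :
    φ (.st c.1) * valL φ (List.finRange (R + 1)) c.2 =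
      φ (.st c'.1) * valL φ (List.finRange (R + 1)) c'.2 * φ .z := by
  have key := fun ρ r => valL_update hφ (List.finRange (R + 1)) ρ r (List.nodup_finRange _)
    (List.mem_finRange r)
  have zc := z_comm hφ (List.finRange (R + 1))
  cases h with
  | @jmp q q' ρ h =>
    have := hφ _ _ (.jmp h)
    simp only [List.map_cons, List.map_nil, List.prod_cons, List.prod_nil, mul_one] at this
    rw [this, mul_assoc, (zc _).eq, mul_assoc]
  | @inc q q' r ρ h =>
    have := hφ _ _ (.inc h)
    simp only [List.map_cons, List.map_nil, List.prod_cons, List.prod_nil, mul_one] at this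
    obtain ⟨rest, hr⟩ := key ρ r
    have e1 := hr (ρ r)
    have e2 := hr (ρ r + 1)
    rw [update_eq_self] at e1
    have : φ (.st q) * valL φ (List.finRange (R + 1)) ρ = φ (.st q') * valL φ (List.finRange (R + 1)) (update ρ r (ρ r + 1)) * φ .z := by
      rw [this, e2, pow_succ', mul_assoc (φ (.x r)), ← e1]
      simp only [mul_assoc]
      rw [(zc _).eq]
    exact this
  | @decs q q' q'' r ρ h h0 =>
    have := hφ _ _ (.decs h)
    simp only [List.map_cons, List.map_nil, List.prod_cons, List.prod_nil, mul_one] at this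
    obtain ⟨rest, hr⟩ := key ρ r
    have e1 := hr (ρ r)
    have e2 := hr (ρ r - 1)
    rw [update_eq_self] at e1
    have h1 : ρ r = (ρ r - 1) + 1 := by omega
    have e3 : valL φ (List.finRange (R + 1)) ρ = φ (.x r) * valL φ (List.finRange (R + 1)) (update ρ r (ρ r - 1)) := by
      rw [e1, e2, ← mul_assoc (φ (.x r)) (φ (.x r) ^ _), ← pow_succ', ← h1]
    have : φ (.st q) * valL φ (List.finRange (R + 1)) ρ = φ (.st q') * valL φ (List.finRange (R + 1)) (update ρ r (ρ r - 1)) * φ .z := by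
      rw [e3, ← mul_assoc, this, mul_assoc, (zc _).eq, mul_assoc]
    exact this
  | @decz q q' q'' r ρ h h0 =>
    have := hφ _ _ (.decz h)
    simp only [List.map_cons, List.map_nil, List.prod_cons, List.prod_nil, mul_one] at this
    have c2 := hφ [.z, .b r] [.b r, .z] (.comm (by simp [isSt]) (by simp [isSt]) (by simp [trk]))
    simp only [List.map_cons, List.map_nil, List.prod_cons, List.prod_nil, mul_one] at c2
    obtain ⟨rest, hr⟩ := key ρ r
    have e1 := hr (ρ r)
    rw [update_eq_self, h0, pow_zero, one_mul] at e1
    have : φ (.st q) * valL φ (List.finRange (R + 1)) ρ = φ (.st q'') * valL φ (List.finRange (R + 1)) ρ * φ .z := by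
      rw [mul_assoc, ← (zc _).eq, e1, ← mul_assoc, this, ← c2]
      simp only [mul_assoc]
    exact this

theorem accept_reach (hφ : ∀ l r, Rule δ l r → (l.map φ).prod = (r.map φ).prod)
    {c c' : T × (Fin (R + 1) → ℕ)} (h : Relation.ReflTransGen (MStep δ) c c') :
    ∃ k, φ (.st c.1) * valL φ (List.finRange (R + 1)) c.2 =
      φ (.st c'.1) * valL φ (List.finRange (R + 1)) c'.2 * φ .z ^ k := by
  induction h with
  | refl => exact ⟨0, by simp⟩
  | tail _ h ih =>
    obtain ⟨k, hk⟩ := ih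
    refine ⟨k + 1, ?_⟩
    rw [hk, accept_step hφ h, pow_succ', mul_assoc]

end Accept

/-- The input word. -/
def W0 (q : T) (n : ℕ) : List (LL T R) :=
  .st q :: (List.replicate n (.x 0) ++ (List.finRange (R + 1)).map .b)

theorem W0_val {M : Type*} [Monoid M] (φ : LL T R → M) (q : T) (n : ℕ) :
    ((W0 q n).map φ).prod = φ (.st q) * valL φ (List.finRange (R + 1)) (Pi.single 0 n) := by
  rw [W0, List.map_cons, List.prod_cons, List.map_append, List.prod_append, List.map_replicate,
    List.prod_replicate, valL, List.finRange_succ]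
  simp only [List.map_cons, List.prod_cons, List.map_map, mul_assoc, Pi.single_eq_same]
  congr 4
  refine List.map_congr_left fun t ht => ?_
  simp

section Reject

variable {δ : T → Instr T (Fin (R + 1))}

def Tr (v : List (LL T R)) (ρ : Fin (R + 1) → ℕ) (k : ℕ) : Prop :=
  (∀ a ∈ v, ¬ isSt a) ∧
  (∀ r, v.filterMap (fun a => if trk a = some r then some a else none) =
    List.replicate (ρ r) (.x r) ++ [.b r]) ∧
  v.countP (fun a => trk a = none) = k

theorem Tr_z {v : List (LL T R)} {ρ k} : Tr (.z :: v) ρ k ↔ k ≠ 0 ∧ Tr v ρ (k - 1) := by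
  simp only [Tr, List.mem_cons, forall_eq_or_imp, isSt, not_false_eq_true, true_and, List.filterMap_cons,
    trk, List.countP_cons]
  simp
  constructor
  · rintro ⟨h1, h2, h3⟩; exact ⟨by omega, h1, h2, by omega⟩
  · rintro ⟨h0, h1, h2, h3⟩; exact ⟨h1, h2, by omega⟩

theorem Tr_x {v : List (LL T R)} {ρ k r} : Tr (.x r :: v) ρ k ↔
    ρ r ≠ 0 ∧ Tr v (update ρ r (ρ r - 1)) k := by
  simp only [Tr, List.mem_cons, forall_eq_or_imp, isSt, not_false_eq_true, true_and, List.filterMap_cons,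
    trk, List.countP_cons]
  have : (decide (some r = none) : Bool) = false := by simp
  simp only [reduceCtorEq, decide_false, Bool.false_eq_true, if_false, add_zero, Option.some_inj]
  constructor
  · rintro ⟨h1, h2, h3⟩
    have hr := h2 r
    have h0 : ρ r ≠ 0 := by
      intro h0
      simp [h0] at hr
    obtain ⟨m, hm⟩ := Nat.exists_eq_succ_of_ne_zero h0
    refine ⟨h0, h1, fun s => ?_, h3⟩
    by_cases hs : r = s
    · subst hs
      simp only [if_true, hm, Nat.succ_eq_add_one, List.replicate_succ, List.cons_append, List.cons.injEq,
        true_and] at hr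
      simp only [update_self, hm, hr]
      simp
    · have := h2 s
      simp only [hs, if_false] at this
      rw [update_of_ne (Ne.symm hs)]
      exact this
  · rintro ⟨h0, h1, h2, h3⟩
    obtain ⟨m, hm⟩ := Nat.exists_eq_succ_of_ne_zero h0
    refine ⟨h1, fun s => ?_, h3⟩
    have := h2 s
    by_cases hs : r = s
    · subst hs
      simp only [update_self, hm] at this
      simp only [if_true, hm, Nat.succ_eq_add_one, List.replicate_succ, List.cons_append, List.cons.injEq,
        true_and, this]
      simp
    · rw [update_of_ne (Ne.symm hs)] at this
      simp only [hs, if_false]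
      exact this

theorem Tr_b {v : List (LL T R)} {ρ k r} (h : Tr (.b r :: v) ρ k) : ρ r = 0 := by
  have := h.2.1 r
  simp only [List.filterMap_cons, trk, if_true] at this
  by_contra h0
  obtain ⟨m, hm⟩ := Nat.exists_eq_succ_of_ne_zero h0
  simp [hm, List.replicate_succ] at this

theorem Tr_swap {v w : List (LL T R)} {ρ k a b} (hab : trk a ≠ trk b)
    (h : Tr (v ++ [a, b] ++ w) ρ k) : Tr (v ++ [b, a] ++ w) ρ k := by
  have hp : (v ++ [a, b] ++ w).Perm (v ++ [b, a] ++ w) :=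
    List.Perm.append_right _ (List.Perm.append_left _ (List.Perm.swap _ _ _))
  refine ⟨fun c hc => h.1 c (hp.mem_iff.2 hc), fun r => ?_, ?_⟩
  · rw [← h.2.1 r]
    simp only [List.filterMap_append]
    congr 2
    simp only [List.filterMap_cons, List.filterMap_nil]
    by_cases h1 : trk a = some r
    · have : trk b ≠ some r := fun h2 => hab (h1.trans h2.symm)
      simp [h1, this]
    · by_cases h2 : trk b = some r <;> simp [h1, h2]
  · rw [← h.2.2]
    exact (hp.countP_eq _).symm

theorem Tr_length {v : List (LL T R)} (h : ∀ a ∈ v, ¬ isSt a) :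
    v.length = (∑ r, (v.filterMap (fun a => if trk a = some r then some a else none)).length) +
      v.countP (fun a => trk a = none) := by
  induction v with
  | nil => simp
  | cons a v ih =>
    have ih := ih fun b hb => h b (List.mem_cons_of_mem _ hb)
    have key : ∀ r, (List.filterMap (fun a => if trk a = some r then some a else none) (a :: v)).length =
        (if trk a = some r then 1 else 0) +
        (List.filterMap (fun a => if trk a = some r then some a else none) v).length := by
      intro r
      rw [List.filterMap_cons]
      split_ifs <;> simp; omega
    simp only [key, Finset.sum_add_distrib, List.length_cons, List.countP_cons]
    rw [ih]
    cases ha : trk a with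
    | none => simp; omega
    | some s => simp; omega

def Hn (δ : T → Instr T (Fin (R + 1))) (ch : T × (Fin (R + 1) → ℕ)) : ℕ → T × (Fin (R + 1) → ℕ) → Prop
  | 0, c => c = ch
  | t + 1, c => ∃ c', MStep δ c c' ∧ Hn δ ch t c'

theorem reach_Hn {ch c} (h : Relation.ReflTransGen (MStep δ) c ch) : ∃ t, Hn δ ch t c := by
  induction h using Relation.ReflTransGen.head_induction_on with
  | refl => exact ⟨0, rfl⟩
  | head h _ ih =>
    obtain ⟨t, ht⟩ := ih
    exact ⟨t + 1, _, h, ht⟩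

theorem MStep_det {c c1 c2} (h1 : MStep δ c c1) (h2 : MStep δ c c2) : c1 = c2 := by
  cases h1 <;> cases h2 <;> simp_all <;> grind

theorem Hn_step {ch c c' t} (hh : δ ch.1 = .halt) (h : Hn δ ch t c) (hs : MStep δ c c') :
    t ≠ 0 ∧ Hn δ ch (t - 1) c' := by
  cases t with
  | zero =>
    exfalso
    simp only [Hn] at h
    subst h
    cases hs <;> simp_all
  | succ t =>
    obtain ⟨c'', h1, h2⟩ := h
    rw [MStep_det hs h1]
    exact ⟨by simp, h2⟩

theorem Hn_sum {ch c t} (h : Hn δ ch t c) : ∑ r, c.2 r ≤ ∑ r, ch.2 r + t := by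
  induction t generalizing c with
  | zero =>
    simp only [Hn] at h
    subst h
    simp
  | succ t ih =>
    obtain ⟨c', h1, h2⟩ := h
    have := ih h2
    have key : ∑ r, c.2 r ≤ ∑ r, c'.2 r + 1 := by
      cases h1 with
      | jmp => simp
      | decz => simp
      | @inc q q' r ρ h =>
        refine le_trans (Finset.sum_le_sum (g := update ρ r (ρ r + 1)) fun s _ => ?_) (Nat.le_succ _)
        rw [update_apply]; split_ifs with hs
        · subst hs; simp
        · simp
      | @decs q q' q'' r ρ h h0 =>
        have e : ∀ s, ρ s = update ρ r (ρ r - 1) s + if s = r then 1 else 0 := by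
          intro s
          rw [update_apply]; split_ifs with hs
          · subst hs; omega
          · simp
        have : ∑ s, ρ s = ∑ s, update ρ r (ρ r - 1) s + 1 := by
          rw [Finset.sum_congr rfl fun s _ => e s, Finset.sum_add_distrib]
          simp
        exact this.le
    omega

/-- The finite saturated language. -/
def Lang (δ : T → Instr T (Fin (R + 1))) (ch : T × (Fin (R + 1) → ℕ)) (K : ℕ) : Set (List (LL T R)) :=
  {W | ∃ q v ρ k t, W = .st q :: v ∧ Tr v ρ k ∧ Hn δ ch t (q, ρ) ∧ k + t = K}

theorem Lang_finite [Finite T] (ch : T × (Fin (R + 1) → ℕ)) (K : ℕ) : (Lang δ ch K).Finite := by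
  refine (List.finite_length_le (LL T R) (1 + (∑ r, ch.2 r + (R + 1) + K))).subset ?_
  rintro W ⟨q, v, ρ, k, t, rfl, h1, h2, h3⟩
  have e1 := Tr_length h1.1
  have e2 := Hn_sum h2
  simp only [h1.2.1, h1.2.2, List.length_append, List.length_replicate, List.length_singleton,
    Finset.sum_add_distrib] at e1
  simp at e1 e2
  simp
  omega

theorem Lang_sat (ch : T × (Fin (R + 1) → ℕ)) (K : ℕ) (hh : δ ch.1 = .halt) {l r} (h : Rule δ l r)
    (u v : List (LL T R)) : u ++ l ++ v ∈ Lang δ ch K ↔ u ++ r ++ v ∈ Lang δ ch K := by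
  have comm1 : ∀ a b : LL T R, ¬ isSt a → trk a ≠ trk b → u ++ [a, b] ++ v ∈ Lang δ ch K →
      u ++ [b, a] ++ v ∈ Lang δ ch K := by
    rintro a b ha hab ⟨q, w, ρ, k, t, e, h1, h2, h3⟩
    cases u with
    | nil =>
      simp at e
      rw [e.1] at ha
      simp [isSt] at ha
    | cons c u =>
      simp only [List.cons_append, List.cons.injEq] at e
      obtain ⟨rfl, rfl⟩ := e
      exact ⟨q, _, ρ, k, t, rfl, Tr_swap hab h1, h2, h3⟩
  have head : ∀ q l, u ++ (Ltr.st q :: l) ++ v ∈ Lang δ ch K ↔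
      u = [] ∧ ∃ ρ k t, Tr (l ++ v) ρ k ∧ Hn δ ch t (q, ρ) ∧ k + t = K := by
    intro q l
    constructor
    · rintro ⟨q1, w, ρ, k, t, e, h1, h2, h3⟩
      cases u with
      | nil =>
        simp at e
        obtain ⟨rfl, rfl⟩ := e
        exact ⟨rfl, ρ, k, t, h1, h2, h3⟩
      | cons c u =>
        exfalso
        simp only [List.cons_append, List.cons.injEq] at e
        obtain ⟨rfl, rfl⟩ := e
        exact h1.1 (.st q) (by simp) trivial
    · rintro ⟨rfl, ρ, k, t, h1, h2, h3⟩
      exact ⟨q, _, ρ, k, t, rfl, h1, h2, h3⟩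
  cases h with
  | @jmp q q' h =>
    rw [head, head]
    refine and_congr_right fun _ => ⟨?_, ?_⟩
    · rintro ⟨ρ, k, t, h1, h2, h3⟩
      obtain ⟨h4, h5⟩ := Hn_step hh h2 (.jmp h)
      exact ⟨ρ, k + 1, t - 1, Tr_z.2 ⟨by simp, h1⟩, h5, by omega⟩
    · rintro ⟨ρ, k, t, h1, h2, h3⟩
      obtain ⟨h4, h5⟩ := Tr_z.1 h1
      exact ⟨ρ, k - 1, t + 1, h5, ⟨_, .jmp h, h2⟩, by omega⟩
  | @inc q q' r h =>
    rw [head, head]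
    refine and_congr_right fun _ => ⟨?_, ?_⟩
    · rintro ⟨ρ, k, t, h1, h2, h3⟩
      obtain ⟨h4, h5⟩ := Hn_step hh h2 (.inc h)
      exact ⟨_, k + 1, t - 1, Tr_x.2 ⟨by simp, Tr_z.2 ⟨by simp, by simpa using h1⟩⟩, h5, by omega⟩
    · rintro ⟨ρ, k, t, h1, h2, h3⟩
      obtain ⟨h4, h5⟩ := Tr_x.1 h1
      obtain ⟨h6, h7⟩ := Tr_z.1 h5
      refine ⟨_, k - 1, t + 1, h7, ⟨_, .inc h, ?_⟩, by omega⟩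
      convert h2 using 2
      rw [update_idem, update_self, Nat.sub_add_cancel (by omega), update_eq_self]
  | @decs q q' q'' r h =>
    rw [head, head]
    refine and_congr_right fun _ => ⟨?_, ?_⟩
    · rintro ⟨ρ, k, t, h1, h2, h3⟩
      obtain ⟨h6, h7⟩ := Tr_x.1 h1
      obtain ⟨h4, h5⟩ := Hn_step hh h2 (.decs h h6)
      exact ⟨_, k + 1, t - 1, Tr_z.2 ⟨by simp, h7⟩, h5, by omega⟩
    · rintro ⟨ρ, k, t, h1, h2, h3⟩
      obtain ⟨h4, h5⟩ := Tr_z.1 h1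
      refine ⟨update ρ r (ρ r + 1), k - 1, t + 1, Tr_x.2 ⟨by simp, by simpa using h5⟩,
        ⟨_, .decs h (by simp), by simpa using h2⟩, by omega⟩
  | @decz q q' q'' r h =>
    rw [head, head]
    have bz : ∀ ρ k, Tr (.b r :: .z :: v) ρ k ↔ Tr (.z :: .b r :: v) ρ k := fun ρ k =>
      ⟨fun h => Tr_swap (v := []) (by simp [trk]) h, fun h => Tr_swap (v := []) (by simp [trk]) h⟩
    refine and_congr_right fun _ => ⟨?_, ?_⟩
    · rintro ⟨ρ, k, t, h1, h2, h3⟩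
      obtain ⟨h4, h5⟩ := Hn_step hh h2 (.decz h (Tr_b h1))
      exact ⟨_, k + 1, t - 1, (bz _ _).2 (Tr_z.2 ⟨by simp, h1⟩), h5, by omega⟩
    · rintro ⟨ρ, k, t, h1, h2, h3⟩
      obtain ⟨h4, h5⟩ := Tr_z.1 ((bz _ _).1 h1)
      exact ⟨ρ, k - 1, t + 1, h5, ⟨_, .decz h (Tr_b h1), h2⟩, by omega⟩
  | @comm a b ha hb hab =>
    exact ⟨comm1 a b ha hab, comm1 b a hb hab.symm⟩

theorem Lang_acc (ch : T × (Fin (R + 1) → ℕ)) (K : ℕ) (acc : T) (hne : acc ≠ ch.1) (ha : δ acc = .halt)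
    (u v : List (LL T R)) : u ++ .st acc :: v ∉ Lang δ ch K := by
  rintro ⟨q, w, ρ, k, t, e, h1, h2, h3⟩
  cases u with
  | nil =>
    simp at e
    obtain ⟨rfl, rfl⟩ := e
    cases t with
    | zero =>
      simp only [Hn] at h2
      subst h2
      exact hne rfl
    | succ t =>
      obtain ⟨c, h, _⟩ := h2
      cases h <;> simp_all
  | cons c u =>
    simp only [List.cons_append, List.cons.injEq] at e
    obtain ⟨rfl, rfl⟩ := e
    exact h1.1 (.st acc) (by simp) trivial

theorem Tr_W0 (n : ℕ) : Tr (T := T) (R := R) (List.replicate n (.x 0) ++ (List.finRange (R + 1)).map .b)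
    (Pi.single 0 n) 0 := by
  induction n with
  | zero =>
    refine ⟨?_, ?_, ?_⟩
    · intro a ha
      simp at ha
      obtain ⟨r, rfl⟩ := ha
      simp [isSt]
    · intro r
      simp only [List.replicate_zero, List.nil_append, Pi.single_zero, Pi.zero_apply,
        List.filterMap_map]
      have : ((fun a : LL T R => if trk a = some r then some a else none) ∘ Ltr.b) =
          fun s : Fin (R + 1) => if s = r then some (.b r) else none := by
        funext s
        by_cases h : s = r <;> simp [trk, h]
      rw [this]
      have key : ∀ l : List (Fin (R + 1)), l.Nodup →
          l.filterMap (fun s => if s = r then some (Ltr.b r : LL T R) else none) =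
            if r ∈ l then [.b r] else [] := by
        intro l hl
        induction l with
        | nil => simp
        | cons s l ih =>
          rw [List.nodup_cons] at hl
          have ih := ih hl.2
          by_cases hs : s = r
          · subst hs
            rw [if_neg hl.1] at ih
            simp [List.filterMap_cons, ih]
          · simp [List.filterMap_cons, ih, hs, Ne.symm hs]
      rw [key _ (List.nodup_finRange _)]
      simp
    · simp [trk]
  | succ n ih =>
    rw [List.replicate_succ, List.cons_append, Tr_x]
    refine ⟨by simp, ?_⟩
    convert ih using 1
    funext s
    simp only [update_apply, Pi.single_apply]
    split_ifs <;> simp_all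

theorem W0_mem {ch : T × (Fin (R + 1) → ℕ)} {q : T} {n : ℕ}
    (h : Relation.ReflTransGen (MStep δ) (q, Pi.single 0 n) ch) : ∃ K, W0 q n ∈ Lang δ ch K := by
  obtain ⟨t, ht⟩ := reach_Hn h
  exact ⟨t, q, _, _, 0, t, rfl, Tr_W0 n, ht, by simp⟩

end Reject

end Rewriting

end AltUndec


open scoped commutatorElement

namespace AltUndec

section Steinberg

theorem hallWitt {G : Type*} [Group G] {x y z : G} (h1 : Commute x z)
    (h2 : Commute ⁅x, y⁆ ⁅y, z⁆) (h3 : Commute ⁅y, z⁆ ⁅⁅x, y⁆, z⁆) :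
    ⁅x, ⁅y, z⁆⁆ = ⁅⁅x, y⁆, z⁆ := by
  have e1 : x * ⁅y, z⁆ * x⁻¹ = ⁅⁅x, y⁆ * y, z⁆ := by
    have hx : x * z * x⁻¹ = z := by rw [h1.eq]; group
    have : x * ⁅y, z⁆ * x⁻¹ = ⁅x * y * x⁻¹, x * z * x⁻¹⁆ := by
      simp only [commutatorElement_def]; group
    rw [this, hx]
    simp only [commutatorElement_def]; group
  have e2 : ⁅⁅x, y⁆ * y, z⁆ = ⁅x, y⁆ * ⁅y, z⁆ * ⁅x, y⁆⁻¹ * ⁅⁅x, y⁆, z⁆ := by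
    simp only [commutatorElement_def]; group
  have e3 : ⁅x, y⁆ * ⁅y, z⁆ * ⁅x, y⁆⁻¹ = ⁅y, z⁆ := by rw [h2.eq]; group
  have : ⁅x, ⁅y, z⁆⁆ = x * ⁅y, z⁆ * x⁻¹ * ⁅y, z⁆⁻¹ := by
    simp only [commutatorElement_def]
  rw [this, e1, e2, e3, h3.eq]; group

theorem commute_comm {G : Type*} [Group G] {x y z : G} (h1 : Commute x y) (h2 : Commute x z) :
    Commute x ⁅y, z⁆ := by
  rw [commutatorElement_def]
  exact ((h1.mul_right h2).mul_right h1.inv_right).mul_right h2.inv_right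

/-- a third index -/
def kk (i j : Fin 5) : Fin 5 :=
  if (0 : Fin 5) ≠ i ∧ (0 : Fin 5) ≠ j then 0 else if (1 : Fin 5) ≠ i ∧ (1 : Fin 5) ≠ j then 1 else 2

theorem kk_spec : ∀ i j : Fin 5, i ≠ kk i j ∧ kk i j ≠ j := by decide

theorem exists_avoid : ∀ i j p q : Fin 5, ∃ k, k ≠ i ∧ k ≠ j ∧ k ≠ p ∧ k ≠ q := by decide

variable {A : Type*} {G : Type*} [Group G]

structure SteinRel (g : Fin 5 → Fin 5 → Option A → G) : Prop where
  s1 : ∀ i j k l a b, i ≠ j → k ≠ l → j ≠ k → i ≠ l → Commute (g i j a) (g k l b)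
  s2 : ∀ i k j a, i ≠ k → k ≠ j → i ≠ j → ⁅g i k a, g k j none⁆ = g i j a
  s3 : ∀ i k j a, i ≠ k → k ≠ j → i ≠ j → ⁅g i k none, g k j a⁆ = g i j a

def EE (g : Fin 5 → Fin 5 → Option A → G) : List A → Fin 5 → Fin 5 → G
  | [], i, j => g i j none
  | s :: u, i, j => ⁅g i (kk i j) (some s), EE g u (kk i j) j⁆

structure Bund (g : Fin 5 → Fin 5 → Option A → G) (n : ℕ) : Prop where
  K : ∀ s u, List.length u < n → ∀ i k j, i ≠ k → k ≠ j → i ≠ j →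
    EE g (s :: u) i j = ⁅g i k (some s), EE g u k j⁆
  B : ∀ u v, List.length u ≤ n → List.length v ≤ n → ∀ i j p q, i ≠ j → p ≠ q → j ≠ p → i ≠ q →
    Commute (EE g u i j) (EE g v p q)
  C : ∀ a v, List.length v ≤ n → ∀ i j p q, i ≠ j → p ≠ q → j ≠ p → i ≠ q →
    Commute (g i j a) (EE g v p q)
  I : ∀ u, List.length u ≤ n → ∀ i k j, i ≠ k → k ≠ j → i ≠ j →
    ⁅g i k none, EE g u k j⁆ = EE g u i j

theorem bund {g : Fin 5 → Fin 5 → Option A → G} (h : SteinRel g) (n : ℕ) : Bund g n := by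
  induction n with
  | zero =>
    refine ⟨by simp, ?_, ?_, ?_⟩
    · intro u v hu hv i j p q h1 h2 h3 h4
      simp only [nonpos_iff_eq_zero, List.length_eq_zero_iff] at hu hv
      subst hu hv
      exact h.s1 _ _ _ _ _ _ h1 h2 h3 h4
    · intro a v hv i j p q h1 h2 h3 h4
      simp only [nonpos_iff_eq_zero, List.length_eq_zero_iff] at hv
      subst hv
      exact h.s1 _ _ _ _ _ _ h1 h2 h3 h4
    · intro u hu i k j h1 h2 h3
      simp only [nonpos_iff_eq_zero, List.length_eq_zero_iff] at hu
      subst hu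
      exact h.s2 _ _ _ _ h1 h2 h3
  | succ n ih =>
    have K0 : ∀ s u, List.length u ≤ n → ∀ i k l j, i ≠ k → k ≠ j → i ≠ j → i ≠ l → l ≠ j →
        ⁅g i k (some s), EE g u k j⁆ = ⁅g i l (some s), EE g u l j⁆ := by
      intro s u hu i k l j h1 h2 h3 h4 h5
      by_cases hkl : k = l
      · subst hkl; rfl
      have e := ih.I u hu k l j hkl h5 h2
      rw [← e]
      have exy : ⁅g i k (some s), g k l none⁆ = g i l (some s) := h.s2 _ _ _ _ h1 hkl h4
      rw [hallWitt, exy]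
      · exact ih.C _ _ hu _ _ _ _ h1 h5 hkl h3
      · rw [exy, e]; exact ih.C _ _ hu _ _ _ _ h4 h2 (Ne.symm hkl) h3
      · rw [exy, e]
        exact commute_comm (ih.C _ _ hu _ _ _ _ h4 h2 (Ne.symm hkl) h3).symm
          (ih.B _ _ hu hu _ _ _ _ h2 h5 (Ne.symm h5) h2)
    have K : ∀ s u, List.length u < n + 1 → ∀ i k j, i ≠ k → k ≠ j → i ≠ j →
        EE g (s :: u) i j = ⁅g i k (some s), EE g u k j⁆ := by
      intro s u hu i k j h1 h2 h3
      have := kk_spec i j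
      exact K0 s u (by omega) _ _ _ _ this.1 this.2 h3 h1 h2
    have C : ∀ a v, List.length v ≤ n + 1 → ∀ i j p q, i ≠ j → p ≠ q → j ≠ p → i ≠ q →
        Commute (g i j a) (EE g v p q) := by
      intro a v hv i j p q h1 h2 h3 h4
      cases v with
      | nil => exact h.s1 _ _ _ _ _ _ h1 h2 h3 h4
      | cons s v =>
        simp only [List.length_cons] at hv
        obtain ⟨k, k1, k2, k3, k4⟩ := exists_avoid i j p q
        rw [K s v (by omega) p k q k3.symm k4 h2]
        exact commute_comm (h.s1 _ _ _ _ _ _ h1 k3.symm h3 k1.symm)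
          (ih.C _ _ (by omega) _ _ _ _ h1 k4 k2.symm h4)
    have B0 : ∀ u v, List.length u ≤ n → List.length v ≤ n + 1 → ∀ i j p q, i ≠ j → p ≠ q →
        j ≠ p → i ≠ q → Commute (EE g u i j) (EE g v p q) := by
      intro u v hu hv i j p q h1 h2 h3 h4
      cases v with
      | nil => exact ih.B _ _ hu (by simp) _ _ _ _ h1 h2 h3 h4
      | cons s v =>
        simp only [List.length_cons] at hv
        obtain ⟨k, k1, k2, k3, k4⟩ := exists_avoid i j p q
        rw [K s v (by omega) p k q k3.symm k4 h2]
        exact commute_comm (ih.C _ _ hu _ _ _ _ k3.symm h1 k1 h3.symm).symm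
          (ih.B _ _ hu (by omega) _ _ _ _ h1 k4 k2.symm h4)
    have B : ∀ u v, List.length u ≤ n + 1 → List.length v ≤ n + 1 → ∀ i j p q, i ≠ j → p ≠ q →
        j ≠ p → i ≠ q → Commute (EE g u i j) (EE g v p q) := by
      intro u v hu hv i j p q h1 h2 h3 h4
      cases v with
      | nil => exact (B0 _ _ (by simp) hu _ _ _ _ h2 h1 h4.symm h3.symm).symm
      | cons s v =>
        simp only [List.length_cons] at hv
        obtain ⟨k, k1, k2, k3, k4⟩ := exists_avoid i j p q
        rw [K s v (by omega) p k q k3.symm k4 h2]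
        exact commute_comm (C _ _ hu _ _ _ _ k3.symm h1 k1 h3.symm).symm
          (B0 _ _ (by omega) hu _ _ _ _ k4 h1 h4.symm k2).symm
    refine ⟨K, B, C, ?_⟩
    intro u hu i k j h1 h2 h3
    cases u with
    | nil => exact h.s2 _ _ _ _ h1 h2 h3
    | cons s u =>
      have hu' := hu
      simp only [List.length_cons] at hu'
      obtain ⟨l, l1, l2, l3, -⟩ := exists_avoid i j k k
      have e1 := K s u (by omega) k l j l3.symm l2 h2
      have e2 := K s u (by omega) i l j l1.symm l2 h3
      have exy : ⁅g i k none, g k l (some s)⁆ = g i l (some s) := h.s3 _ _ _ _ h1 l3.symm l1.symm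
      rw [e1, hallWitt, exy, ← e2]
      · exact C _ _ (by omega) _ _ _ _ h1 l2 l3.symm h3
      · rw [exy, ← e1]; exact C _ _ hu _ _ _ _ l1.symm h2 l3 h3
      · rw [exy, ← e1, ← e2]; exact B _ _ hu hu _ _ _ _ h2 h3 h3.symm h2

theorem EE_mul {g : Fin 5 → Fin 5 → Option A → G} (h : SteinRel g) (u v : List A) :
    ∀ i j k, i ≠ j → j ≠ k → i ≠ k → ⁅EE g u i j, EE g v j k⁆ = EE g (u ++ v) i k := by
  have K := fun s u => (bund h (List.length u + 1)).K s u (by simp)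
  have B : ∀ u v, ∀ i j p q, i ≠ j → p ≠ q →
        j ≠ p → i ≠ q → Commute (EE g u i j) (EE g v p q) := fun u v =>
    (bund h (List.length u + List.length v)).B u v (by simp) (by simp)
  have C := fun a v => (bund h (List.length v)).C a v le_rfl
  have I := fun v => (bund h (List.length v)).I v le_rfl
  induction u with
  | nil => intro i j k h1 h2 h3; exact I v _ _ _ h1 h2 h3
  | cons s u ih =>
    intro i j k h1 h2 h3
    obtain ⟨l, l1, l2, l3, -⟩ := exists_avoid i j k k
    have e1 := K s u i l j l1.symm l2 h1
    have e2 := ih l j k l2 h2 l3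
    have e3 := K s (u ++ v) i l k l1.symm l3 h3
    rw [List.cons_append, e3, ← e2, e1, hallWitt]
    · exact C _ _ _ _ _ _ l1.symm h2 l2 h3
    · rw [← e1, e2]; exact B _ _ _ _ _ _ h1 l3 l2.symm h3
    · rw [← e1, e2]
      exact commute_comm (B _ _ _ _ _ _ h1 l3 l2.symm h3).symm (B _ _ _ _ _ _ l3 h2 h2.symm l3)

theorem EE_single {g : Fin 5 → Fin 5 → Option A → G} (h : SteinRel g) (s : A) (i j : Fin 5)
    (hij : i ≠ j) : EE g [s] i j = g i j (some s) := by
  have := kk_spec i j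
  exact h.s2 _ _ _ _ this.1 this.2 hij

/-- The congruence of words. -/
def stCon {g : Fin 5 → Fin 5 → Option A → G} (h : SteinRel g) : Con (FreeMonoid A) where
  r u v := ∀ i j, i ≠ j → EE g u.toList i j = EE g v.toList i j
  iseqv := ⟨fun _ _ _ _ => rfl, fun h i j hij => (h i j hij).symm,
    fun h1 h2 i j hij => (h1 i j hij).trans (h2 i j hij)⟩
  mul' := by
    intro a b c d h1 h2 i j hij
    have := kk_spec i j
    rw [FreeMonoid.toList_mul, FreeMonoid.toList_mul, ← EE_mul h _ _ i (kk i j) j this.1 this.2 hij,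
      ← EE_mul h _ _ i (kk i j) j this.1 this.2 hij, h1 _ _ this.1, h2 _ _ this.2]

theorem EE_zero {g : Fin 5 → Fin 5 → Option A → G} (h : SteinRel g) (s : A)
    (hs : ∀ i j, i ≠ j → g i j (some s) = 1) (u v : List A) (i j : Fin 5) (hij : i ≠ j) :
    EE g (u ++ s :: v) i j = 1 := by
  have hv : ∀ i j, i ≠ j → EE g (s :: v) i j = 1 := by
    intro i j hij
    have := kk_spec i j
    rw [EE, hs _ _ this.1, commutatorElement_one_left]
  have := kk_spec i j
  rw [← EE_mul h _ _ i (kk i j) j this.1 this.2 hij, hv _ _ this.2, commutatorElement_one_right]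

end Steinberg

end AltUndec


open scoped commutatorElement

namespace AltUndec

section Model

theorem accept_EE {T : Type} {R : ℕ} {δ : T → Instr T (Fin (R + 1))} {G : Type*} [Group G]
    {g : Fin 5 → Fin 5 → Option (LL T R) → G} (hg : SteinRel g)
    (hr : ∀ l r, Rule δ l r → ∀ i j, i ≠ j → EE g l i j = EE g r i j) (acc : T)
    (ha : ∀ i j, i ≠ j → g i j (some (.st acc)) = 1) (q : T) (n : ℕ) (ρ)
    (h : Relation.ReflTransGen (MStep δ) (q, Pi.single 0 n) (acc, ρ)) (i j : Fin 5) (hij : i ≠ j) :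
    EE g (W0 q n) i j = 1 := by
  let φ : LL T R → (stCon hg).Quotient := fun a => ((FreeMonoid.of a : FreeMonoid (LL T R)) : (stCon hg).Quotient)
  have hprod : ∀ l : List (LL T R), (l.map φ).prod = ((FreeMonoid.ofList l : FreeMonoid (LL T R)) : (stCon hg).Quotient) := by
    intro l
    induction l with
    | nil => rfl
    | cons a l ih =>
      rw [List.map_cons, List.prod_cons, ih, FreeMonoid.ofList_cons, Con.coe_mul]
  have hφ : ∀ l r, Rule δ l r → (l.map φ).prod = (r.map φ).prod := by
    intro l r hlr
    rw [hprod, hprod]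
    exact (Con.eq _).2 (hr l r hlr)
  obtain ⟨k, hk⟩ := accept_reach hφ h
  rw [← W0_val] at hk
  have hv : ∃ w : List (LL T R), valL φ (List.finRange (R + 1)) ρ * φ .z ^ k = (w.map φ).prod := by
    obtain ⟨w, hw⟩ := Con.mk'_surjective (c := stCon hg) (valL φ (List.finRange (R + 1)) ρ * φ .z ^ k)
    exact ⟨w.toList, by rw [hprod]; exact hw.symm⟩
  obtain ⟨w, hw⟩ := hv
  dsimp only at hk
  rw [mul_assoc, hw, ← List.prod_cons, ← List.map_cons, hprod, hprod] at hk
  have := (Con.eq _).1 hk i j hij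
  refine this.trans ?_
  exact EE_zero hg _ ha [] w i j hij

section OneAdd

variable {Q : Type*} [Ring Q]

def oneAdd (x : Q) (h : x * x = 0) : Qˣ where
  val := 1 + x
  inv := 1 - x
  val_inv := by rw [add_mul, mul_sub, mul_sub, h]; simp
  inv_val := by rw [sub_mul, mul_add, mul_add, h]; simp

theorem oneAdd_comm {x y : Q} (hx : x * x = 0) (hy : y * y = 0) (hyx : y * x = 0)
    (hxy : x * y * (x * y) = 0) : ⁅oneAdd x hx, oneAdd y hy⁆ = oneAdd (x * y) hxy := by
  rw [commutatorElement_def, mul_inv_eq_iff_eq_mul, mul_inv_eq_iff_eq_mul]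
  ext
  simp only [Units.val_mul, oneAdd]
  have e1 : x * y * x = 0 := by rw [mul_assoc, hyx, mul_zero]
  have e2 : x * y * y = 0 := by rw [mul_assoc, hy, mul_zero]
  simp only [add_mul, mul_add, one_mul, mul_one, e1, e2, hyx, zero_mul]
  abel

theorem oneAdd_commute {x y : Q} (hx : x * x = 0) (hy : y * y = 0) (hxy : x * y = 0) (hyx : y * x = 0) :
    Commute (oneAdd x hx) (oneAdd y hy) := by
  ext
  simp only [Units.val_mul, oneAdd, add_mul, mul_add, one_mul, mul_one, hxy, hyx]
  abel

theorem oneAdd_congr {x y : Q} (hx : x * x = 0) (hy : y * y = 0) (h : x = y) :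
    oneAdd x hx = oneAdd y hy := by subst h; rfl

theorem oneAdd_eq_one {x : Q} (hx : x * x = 0) : oneAdd x hx = 1 ↔ x = 0 := by
  rw [Units.ext_iff]
  simp [oneAdd]

theorem oneAdd_sq {x : Q} (hx : x * x = 0) (h2 : x + x = 0) : oneAdd x hx ^ 2 = 1 := by
  ext
  have e : (1 + x) * (1 + x) = 1 := by
    simp only [add_mul, mul_add, one_mul, mul_one, hx, add_zero, add_assoc, h2]
  rw [pow_two, Units.val_mul]
  exact e

end OneAdd

variable {A : Type}

def act (u : List A) (p : Set (List A)) : Set (List A) := {v | u ++ v ∈ p}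

theorem act_append (u v : List A) (p) : act (u ++ v) p = act v (act u p) := by
  ext w
  simp [act]

abbrev NX (E : Set (List A)) : Type := {q : Set (List A) // q.Nonempty ∧ ∃ u, q = act u E}

theorem NX_finite [Finite A] {E : Set (List A)} (hE : E.Finite) : Finite (NX E) := by
  obtain ⟨N, hN⟩ : ∃ N, ∀ w ∈ E, w.length ≤ N := by
    obtain ⟨N, hN⟩ := (hE.image List.length).bddAbove
    exact ⟨N, fun w hw => hN ⟨w, hw, rfl⟩⟩
  have : {q : Set (List A) | q.Nonempty ∧ ∃ u, q = act u E}.Finite := by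
    refine (List.finite_length_le A N).finite_subsets.subset ?_
    rintro q ⟨-, u, rfl⟩ w hw
    have := hN _ hw
    simp at this
    simp
    omega
  exact this.to_subtype

open Classical in
noncomputable def Mw (E : Set (List A)) (u : List A) : Matrix (NX E) (NX E) (ZMod 2) :=
  Matrix.of fun p q => if act u p.1 = q.1 then 1 else 0

theorem Mw_append {E : Set (List A)} [Fintype (NX E)] (u v : List A) : Mw E (u ++ v) = Mw E u * Mw E v := by
  classical
  ext p q
  rw [Matrix.mul_apply]
  simp only [Mw, Matrix.of_apply, act_append]
  by_cases h : (act u p.1).Nonempty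
  · obtain ⟨w, hw⟩ := p.2.2
    let r : NX E := ⟨act u p.1, h, w ++ u, by rw [hw, act_append]⟩
    rw [Finset.sum_eq_single r]
    · simp [r]
    · intro s _ hs
      rw [if_neg, zero_mul]
      intro h
      exact hs (Subtype.ext h.symm)
    · simp
  · rw [Finset.sum_eq_zero]
    · rw [if_neg]
      intro h'
      have := q.2.1
      rw [← h'] at this
      obtain ⟨w, hw⟩ := this
      exact h ⟨v ++ w, hw⟩
    · intro s _
      rw [if_neg, zero_mul]
      intro h'
      exact h (h' ▸ s.2.1)

open Classical in
theorem Mw_nil {E : Set (List A)} : Mw E [] = 1 := by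
  ext p q
  rw [Matrix.one_apply]
  simp only [Mw, Matrix.of_apply]
  have : act [] p.1 = q.1 ↔ p = q := by
    rw [Subtype.ext_iff]; rfl
  simp [this]

noncomputable def el {Q : Type*} [Ring Q] (i j : Fin 5) (a : Q) : (Matrix (Fin 5) (Fin 5) Q)ˣ :=
  if h : i ≠ j then oneAdd (Matrix.single i j a) (Matrix.single_mul_single_of_ne _ _ _ _ h.symm _) else 1

theorem el_comm {Q : Type*} [Ring Q] (i k j : Fin 5) (a b : Q) (h1 : i ≠ k) (h2 : k ≠ j) (h3 : i ≠ j) :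
    ⁅el i k a, el k j b⁆ = el i j (a * b) := by
  rw [el, el, el, dif_pos h1, dif_pos h2, dif_pos h3, oneAdd_comm]
  · apply oneAdd_congr
    simp
  · exact Matrix.single_mul_single_of_ne _ _ _ _ h3.symm _
  · simp [h3.symm]

theorem el_commute {Q : Type*} [Ring Q] (i j k l : Fin 5) (a b : Q) (h1 : i ≠ j) (h2 : k ≠ l)
    (h3 : j ≠ k) (h4 : i ≠ l) : Commute (el i j a) (el k l b) := by
  rw [el, el, dif_pos h1, dif_pos h2]
  apply oneAdd_commute
  · exact Matrix.single_mul_single_of_ne _ _ _ _ h3 _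
  · exact Matrix.single_mul_single_of_ne _ _ _ _ h4.symm _

theorem exists_model [Finite A] (E : Set (List A)) (hE : E.Finite) (w0 : List A) (hw0 : w0 ∈ E)
    (Rul : List A → List A → Prop) (hsat : ∀ l r, Rul l r → ∀ u v, u ++ l ++ v ∈ E ↔ u ++ r ++ v ∈ E)
    (acc : A) (hacc : ∀ u v, u ++ acc :: v ∉ E) :
    ∃ (L : Type) (_ : Group L) (_ : Finite L) (g : Fin 5 → Fin 5 → Option A → L), SteinRel g ∧
      (∀ l r, Rul l r → ∀ i j, i ≠ j → EE g l i j = EE g r i j) ∧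
      (∀ i j, i ≠ j → g i j (some acc) = 1) ∧ (∀ i a, g i i a = 1) ∧
      (∀ i j, i ≠ j → EE g w0 i j ≠ 1 ∧ (EE g w0 i j) ^ 2 = 1 ∧ g i j none ≠ 1 ∧ g i j none ^ 2 = 1) := by
  classical
  have := NX_finite hE
  have := Fintype.ofFinite (NX E)
  let Q := Matrix (NX E) (NX E) (ZMod 2)
  let g : Fin 5 → Fin 5 → Option A → (Matrix (Fin 5) (Fin 5) Q)ˣ := fun i j a =>
    el i j (Mw E a.toList)
  have hg : SteinRel g := by
    refine ⟨?_, ?_, ?_⟩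
    · intro i j k l a b h1 h2 h3 h4
      exact el_commute _ _ _ _ _ _ h1 h2 h3 h4
    · intro i k j a h1 h2 h3
      simp only [g]
      rw [el_comm _ _ _ _ _ h1 h2 h3]
      simp [Mw_nil]
    · intro i k j a h1 h2 h3
      simp only [g]
      rw [el_comm _ _ _ _ _ h1 h2 h3]
      simp [Mw_nil]
  have hEE : ∀ u i j, i ≠ j → EE g u i j = el i j (Mw E u) := by
    intro u
    induction u with
    | nil => intro i j hij; rfl
    | cons s u ih =>
      intro i j hij
      have := kk_spec i j
      rw [EE, ih _ _ this.2]
      simp only [g]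
      rw [el_comm _ _ _ _ _ this.1 this.2 hij, ← Mw_append]
      rfl
  have hel1 : ∀ i j (a : Q), i ≠ j → (el i j a = 1 ↔ a = 0) := by
    intro i j a hij
    rw [el, dif_pos hij, oneAdd_eq_one]
    constructor
    · intro h
      have := congrFun (congrFun h i) j
      simpa using this
    · rintro rfl; simp
  have hel2 : ∀ i j (a : Q), i ≠ j → el i j a ^ 2 = 1 := by
    intro i j a hij
    rw [el, dif_pos hij]
    apply oneAdd_sq
    rw [← Matrix.single_add]
    have : a + a = 0 := by
      ext p q
      exact CharTwo.add_self_eq_zero _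
    rw [this, Matrix.single_zero]
  let p0 : NX E := ⟨E, ⟨w0, hw0⟩, [], rfl⟩
  have hne : Mw E w0 ≠ 0 := by
    intro h
    let q0 : NX E := ⟨act w0 E, ⟨[], by simpa [act] using hw0⟩, w0, rfl⟩
    have := congrFun (congrFun h p0) q0
    rw [Mw, Matrix.of_apply, if_pos rfl] at this
    simp at this
  have hne1 : Mw E ([] : List A) ≠ 0 := by
    intro h
    have := congrFun (congrFun h p0) p0
    simp [Mw_nil] at this
  refine ⟨(Matrix (Fin 5) (Fin 5) Q)ˣ, inferInstance, inferInstance, g, hg, ?_, ?_, ?_, ?_⟩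
  · intro l r hlr i j hij
    rw [hEE _ _ _ hij, hEE _ _ _ hij]
    congr 1
    have : ∀ p : NX E, act l p.1 = act r p.1 := by
      rintro ⟨p, -, u, rfl⟩
      ext v
      simpa [act] using hsat l r hlr u v
    ext p q
    simp [Mw, this]
  · intro i j hij
    change el i j (Mw E [acc]) = 1
    rw [hel1 _ _ _ hij]
    ext p q
    simp only [Mw, Matrix.of_apply, Matrix.zero_apply]
    refine if_neg ?_
    intro h
    obtain ⟨w, hw⟩ := q.2.1
    rw [← h] at hw
    obtain ⟨u, hu⟩ := p.2.2
    rw [hu] at hw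
    exact hacc u w hw
  · intro i a
    simp [g, el]
  · intro i j hij
    rw [hEE _ _ _ hij]
    exact ⟨fun h => hne ((hel1 _ _ _ hij).1 h), hel2 _ _ _ hij,
      fun h => hne1 ((hel1 _ _ _ hij).1 h), hel2 _ _ _ hij⟩

end Model

end AltUndec

namespace AltUndec
open Equiv Equiv.Perm

def cubePerm {α : Type*} (F : α → α) (h : ∀ x, F (F (F x)) = x) : Equiv.Perm α :=
  ⟨F, fun x => F (F x), h, h⟩

@[simp] theorem cubePerm_apply {α : Type*} (F : α → α) (h : ∀ x, F (F (F x)) = x) (x : α) :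
    cubePerm F h x = F x := rfl

theorem cubePerm_inv {α : Type*} (F : α → α) (h : ∀ x, F (F (F x)) = x) :
    (cubePerm F h)⁻¹ = (cubePerm F h) * (cubePerm F h) := by
  rw [inv_eq_iff_mul_eq_one]; ext x; simp [h]

theorem cubePerm_cube {α : Type*} (F : α → α) (h : ∀ x, F (F (F x)) = x) :
    (cubePerm F h) ^ 3 = 1 := by
  ext x; simp [pow_succ, h]

abbrev YY (N f : ℕ) := (Bool × Fin N) ⊕ Fin f

section
variable (M f : ℕ)

def t1 (i : Fin (3 * M)) : Fin (3 * M) :=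
  ⟨if i.1 % 3 = 2 then i.1 - 2 else i.1 + 1, by have := i.2; split_ifs <;> omega⟩

def t2 (i : Fin (3 * M)) : Fin (3 * M) :=
  ⟨if i.1 % 3 = 2 then (if i.1 + 1 = 3 * M then i.1 else i.1 + 1) else
    if i.1 % 3 = 0 then (if i.1 = 0 then 0 else i.1 + 1) else
    if i.1 = 1 then 1 else i.1 - 2, by have := i.2; split_ifs <;> omega⟩

theorem t1_cube (i : Fin (3 * M)) : t1 M (t1 M (t1 M i)) = i := by
  apply Fin.ext
  have := i.2
  simp only [t1]
  split_ifs <;> omega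

theorem t2_cube (i : Fin (3 * M)) : t2 M (t2 M (t2 M i)) = i := by
  apply Fin.ext
  have := i.2
  simp only [t2]
  by_cases h : i.1 % 3 = 2
  · by_cases h' : i.1 + 1 = 3 * M
    · simp [h, h']
    · have h1 : (i.1 + 1) % 3 = 0 := by omega
      have h2 : (i.1 + 2) % 3 = 1 := by omega
      simp [h, h', h1, h2]
  · by_cases h' : i.1 % 3 = 0
    · by_cases h0 : i.1 = 0
      · simp [h0]
      · have h1 : (i.1 + 1) % 3 = 1 := by omega
        have h2 : (i.1 + 1 - 2) % 3 = 2 := by omega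
        simp [h', h0, h1]
        split_ifs <;> omega
    · by_cases h0 : i.1 = 1
      · simp [h0]
      · have h3 : i.1 % 3 = 1 := by omega
        have h2 : (i.1 - 2) % 3 = 2 := by omega
        have h4 : i.1 - 2 + 1 ≠ 3 * M := by have := i.2; omega
        have h5 : (i.1 - 2 + 1) % 3 = 0 := by omega
        simp [h3, h0, h2, h4, h5]
        omega

def yF {N : ℕ} (t : Fin N → Fin N) : YY N f → YY N f
  | .inl (true, i) => .inl (true, t i)
  | .inl (false, i) => .inl (false, t (t i))
  | .inr j => .inr j

theorem yF_cube {N : ℕ} (t : Fin N → Fin N) (h : ∀ x, t (t (t x)) = x) (x : YY N f) :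
    yF f t (yF f t (yF f t x)) = x := by
  rcases x with ⟨_ | _, i⟩ | j <;> simp [yF, h]

def flF {N : ℕ} : YY N f → YY N f
  | .inl (b, i) => .inl (!b, i)
  | .inr j => .inr j

theorem flF_flF {N : ℕ} (x : YY N f) : flF f (flF f x) = x := by
  rcases x with ⟨b, i⟩ | j <;> simp [flF]

def fl (N f : ℕ) : Perm (YY N f) := ⟨flF f, flF f, flF_flF f, flF_flF f⟩

@[simp] theorem fl_apply {N f : ℕ} (x : YY N f) : fl N f x = flF f x := rfl

theorem fl_inv {N f : ℕ} : (fl N f)⁻¹ = fl N f := rfl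

def zF {N : ℕ} (hf : f ≤ N) (P : Fin f → Bool) : YY N f → YY N f
  | .inl (true, i) => if h : i.1 < f then (if P ⟨i.1, h⟩ then .inl (false, i) else .inl (true, i))
      else .inl (true, i)
  | .inl (false, i) => if h : i.1 < f then (if P ⟨i.1, h⟩ then .inr ⟨i.1, h⟩ else .inl (false, i))
      else .inl (false, i)
  | .inr j => if P j then .inl (true, ⟨j.1, by omega⟩) else .inr j

theorem zF_cube {N : ℕ} (hf : f ≤ N) (P : Fin f → Bool) (x : YY N f) :
    zF f hf P (zF f hf P (zF f hf P x)) = x := by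
  rcases x with ⟨_ | _, i⟩ | j
  · by_cases h : i.1 < f
    · by_cases h2 : P ⟨i.1, h⟩ <;> simp [zF, h, h2]
    · simp [zF, h]
  · by_cases h : i.1 < f
    · by_cases h2 : P ⟨i.1, h⟩ <;> simp [zF, h, h2]
    · simp [zF, h]
  · by_cases h2 : P j <;> simp [zF, h2]

theorem yF_fl {N : ℕ} (t : Fin N → Fin N) (h : ∀ x, t (t (t x)) = x) :
    fl N f * cubePerm (yF f t) (yF_cube f t h) * (fl N f)⁻¹ = (cubePerm (yF f t) (yF_cube f t h))⁻¹ := by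
  rw [fl_inv, cubePerm_inv]
  ext1 x
  rcases x with ⟨_ | _, i⟩ | j <;> simp [yF, h, flF]

theorem zF_fl {N : ℕ} (hf : f ≤ N) (P : Fin f → Bool) :
    fl N f * cubePerm (zF f hf P) (zF_cube f hf P) * (fl N f)⁻¹ =
      (cubePerm (zF f hf P) (zF_cube f hf P))⁻¹ := by
  rw [fl_inv, cubePerm_inv]
  ext1 x
  rcases x with ⟨_ | _, i⟩ | j
  · by_cases h : i.1 < f
    · by_cases h2 : P ⟨i.1, h⟩ <;> simp [zF, h, h2, flF]
    · simp [zF, h, flF]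
  · by_cases h : i.1 < f
    · by_cases h2 : P ⟨i.1, h⟩ <;> simp [zF, h, h2, flF]
    · simp [zF, h, flF]
  · by_cases h2 : P j <;> simp [zF, h2, flF]

def ys (hf : f ≤ 3 * M) : Fin 4 → Perm (YY (3 * M) f)
  | 0 => cubePerm _ (yF_cube f (t1 M) (t1_cube M))
  | 1 => cubePerm _ (yF_cube f (t2 M) (t2_cube M))
  | 2 => cubePerm _ (zF_cube f hf (fun j => j.1 != 0))
  | 3 => cubePerm _ (zF_cube f hf (fun j => j.1 == 0))

theorem ys2_apply (hf : f ≤ 3 * M) (x) : ys M f hf 2 x = zF f hf (fun j => j.1 != 0) x := rfl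
theorem ys3_apply (hf : f ≤ 3 * M) (x) : ys M f hf 3 x = zF f hf (fun j => j.1 == 0) x := rfl

theorem ys_cube (hf : f ≤ 3 * M) (k : Fin 4) : ys M f hf k ^ 3 = 1 := by
  fin_cases k <;> exact cubePerm_cube _ _

theorem ys_fl (hf : f ≤ 3 * M) (k : Fin 4) :
    fl _ f * ys M f hf k * (fl _ f)⁻¹ = (ys M f hf k)⁻¹ := by
  fin_cases k
  · exact yF_fl f (t1 M) (t1_cube M)
  · exact yF_fl f (t2 M) (t2_cube M)
  · exact zF_fl _ _ _
  · exact zF_fl _ _ _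

theorem ys_three (hf : f ≤ 3 * M) (hf2 : 2 ≤ f) : (ys M f hf 3).IsThreeCycle := by
  rw [← card_support_eq_three_iff]
  have : (ys M f hf 3).support = {.inl (true, ⟨0, by omega⟩), .inl (false, ⟨0, by omega⟩), .inr ⟨0, by omega⟩} := by
    ext x
    rw [mem_support]
    change zF f hf (fun j => j.1 == 0) x ≠ x ↔ _
    rcases x with ⟨_ | _, i⟩ | j
    · by_cases h2 : i.1 = 0
      · have : 0 < f := by omega
        simp [zF, h2, this, Fin.ext_iff]
      · simp [zF, h2, Fin.ext_iff]
    · by_cases h2 : i.1 = 0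
      · have : 0 < f := by omega
        simp [zF, h2, this, Fin.ext_iff]
      · simp [zF, h2, Fin.ext_iff]
    · by_cases h2 : j.1 = 0 <;> simp [zF, h2, Fin.ext_iff]
  rw [this]
  simp

/-- reachability by a subgroup -/
def RR {α : Type*} (K : Subgroup (Perm α)) (x y : α) : Prop := ∃ g ∈ K, g x = y

theorem RR.refl {α : Type*} {K : Subgroup (Perm α)} (x : α) : RR K x x := ⟨1, K.one_mem, rfl⟩
theorem RR.trans {α : Type*} {K : Subgroup (Perm α)} {x y z : α} (h : RR K x y) (h' : RR K y z) :
    RR K x z := by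
  obtain ⟨g, hg, rfl⟩ := h
  obtain ⟨k, hk, rfl⟩ := h'
  exact ⟨k * g, K.mul_mem hk hg, rfl⟩
theorem RR.symm {α : Type*} {K : Subgroup (Perm α)} {x y : α} (h : RR K x y) : RR K y x := by
  obtain ⟨g, hg, rfl⟩ := h
  exact ⟨g⁻¹, K.inv_mem hg, by simp⟩

def x0 (hf : f ≤ 3 * M) (hf2 : 2 ≤ f) : YY (3 * M) f := .inl (true, ⟨0, by omega⟩)
def r0 (hf2 : 2 ≤ f) : YY (3 * M) f := .inr ⟨0, by omega⟩

def K1 (hf : f ≤ 3 * M) : Subgroup (Perm (YY (3 * M) f)) :=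
  Subgroup.closure {ys M f hf 0, ys M f hf 1, ys M f hf 2}

theorem K1_fix (hf : f ≤ 3 * M) (hf2 : 2 ≤ f) (g) (hg : g ∈ K1 M f hf) :
    g (r0 M f hf2) = r0 M f hf2 := by
  have : K1 M f hf ≤ MulAction.stabilizer (Perm (YY (3 * M) f)) (r0 M f hf2) := by
    rw [K1, Subgroup.closure_le]
    rintro g (rfl | rfl | rfl)
    · rfl
    · rfl
    · change zF f hf (fun j => j.1 != 0) (r0 M f hf2) = r0 M f hf2
      simp [zF, r0]
  exact this hg

theorem K1_step (hf : f ≤ 3 * M) (t : Fin (3 * M) → Fin (3 * M)) (ht : ∀ x, t (t (t x)) = x)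
    (h : cubePerm _ (yF_cube f t ht) ∈ K1 M f hf) (b : Bool) (i : Fin (3 * M)) :
    RR (K1 M f hf) (.inl (b, i)) (.inl (b, t i)) := by
  cases b
  · refine RR.symm ⟨_, h, ?_⟩
    simp [yF, ht]
  · refine ⟨_, h, ?_⟩
    simp [yF]

theorem K1_row (hf : f ≤ 3 * M) (b : Bool) (i : ℕ) (hi : i < 3 * M) :
    RR (K1 M f hf) (.inl (b, ⟨0, by omega⟩)) (.inl (b, ⟨i, hi⟩)) := by
  induction i with
  | zero => exact RR.refl _
  | succ i ih =>
    refine (ih (by omega)).trans ?_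
    by_cases h : i % 3 = 2
    · have := K1_step M f hf (t2 M) (t2_cube M) (Subgroup.subset_closure (by simp [ys])) b ⟨i, by omega⟩
      have e : t2 M ⟨i, by omega⟩ = ⟨i + 1, hi⟩ := by
        simp only [t2, h, if_true]
        rw [Fin.mk.injEq, if_neg (by omega)]
      rwa [e] at this
    · have := K1_step M f hf (t1 M) (t1_cube M) (Subgroup.subset_closure (by simp [ys])) b ⟨i, by omega⟩
      have e : t1 M ⟨i, by omega⟩ = ⟨i + 1, hi⟩ := by
        simp [t1, h]
      rwa [e] at this

theorem K1_trans (hf : f ≤ 3 * M) (hf2 : 2 ≤ f) (x) (hx : x ≠ r0 M f hf2) :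
    RR (K1 M f hf) (x0 M f hf hf2) x := by
  have hm : ys M f hf 2 ∈ K1 M f hf := Subgroup.subset_closure (by simp)
  rcases x with ⟨_ | _, i⟩ | j
  · refine (K1_row M f hf true 1 (by omega)).trans (RR.trans ⟨_, hm, ?_⟩ (((K1_row M f hf false 1 (by omega)).symm).trans (K1_row M f hf false i.1 i.2)))
    rw [ys2_apply]
    have : 1 < f := by omega
    simp [zF, this]
  · exact K1_row M f hf true i.1 i.2
  · have hj : j.1 ≠ 0 := by
      intro h; apply hx; simp [r0, Fin.ext_iff, h]
    refine (K1_row M f hf true j.1 (by omega)).trans (RR.symm ⟨_, hm, ?_⟩)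
    rw [ys2_apply]
    simp [zF, hj]

theorem ys_alt (hf : f ≤ 3 * M) (hf2 : 2 ≤ f) :
    alternatingGroup (YY (3 * M) f) ≤ Subgroup.closure (Set.range (ys M f hf)) := by
  set K := Subgroup.closure (Set.range (ys M f hf)) with hK
  have hle : K1 M f hf ≤ K := by
    apply Subgroup.closure_mono
    rintro g (rfl | rfl | rfl) <;> exact ⟨_, rfl⟩
  have h3 : ys M f hf 3 ∈ K := Subgroup.subset_closure ⟨_, rfl⟩
  have hmono : ∀ {x y}, RR (K1 M f hf) x y → RR K x y := fun ⟨g, hg, e⟩ => ⟨g, hle hg, e⟩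
  have hr : RR K (r0 M f hf2) (x0 M f hf hf2) := by
    refine ⟨_, h3, ?_⟩
    rw [ys3_apply]
    simp [zF, r0, x0]
  have htr : ∀ x, RR K x (r0 M f hf2) := by
    intro x
    by_cases hx : x = r0 M f hf2
    · subst hx; exact RR.refl _
    · exact ((hr.trans (hmono (K1_trans M f hf hf2 x hx)))).symm
  have h2 : ∀ a b, a ≠ b → ∃ g ∈ K, g a = r0 M f hf2 ∧ g b = x0 M f hf hf2 := by
    intro a b hab
    obtain ⟨k, hk, e⟩ := htr a
    have hb : k b ≠ r0 M f hf2 := by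
      rw [← e]; exact fun h => hab (k.injective h).symm
    obtain ⟨g, hg, e2⟩ := (K1_trans M f hf hf2 _ hb).symm
    refine ⟨g * k, K.mul_mem (hle hg) hk, ?_, e2⟩
    rw [Perm.mul_apply, e, K1_fix M f hf hf2 g hg]
  have h2t : MulAction.IsMultiplyPretransitive K (YY (3 * M) f) 2 := by
    rw [MulAction.is_two_pretransitive_iff]
    intro a b c d hab hcd
    obtain ⟨g, hg, e1, e2⟩ := h2 a b hab
    obtain ⟨k, hk, e3, e4⟩ := h2 c d hcd
    refine ⟨⟨k⁻¹ * g, K.mul_mem (K.inv_mem hk) hg⟩, ?_, ?_⟩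
    · change k⁻¹ (g a) = c
      rw [e1, ← e3]; simp
    · change k⁻¹ (g b) = d
      rw [e2, ← e4]; simp
  have hp : MulAction.IsPreprimitive K (YY (3 * M) f) :=
    MulAction.isPreprimitive_of_is_two_pretransitive h2t
  exact Equiv.Perm.alternatingGroup_le_of_isPreprimitive_of_isThreeCycle_mem hp (ys_three M f hf hf2) h3

end
end AltUndec

namespace AltUndec
open Equiv Equiv.Perm

theorem invol_isConj {α : Type*} [Fintype α] [DecidableEq α] (σ τ : Perm α) (hσ : σ ^ 2 = 1)
    (hτ : τ ^ 2 = 1) (h : σ.support.card = τ.support.card) : IsConj σ τ := by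
  have key : ∀ ρ : Perm α, ρ ^ 2 = 1 → ρ.cycleType = Multiset.replicate (ρ.support.card / 2) 2 := by
    intro ρ hρ
    have h1 : ρ.cycleType = Multiset.replicate (Multiset.card ρ.cycleType) 2 :=
      Multiset.eq_replicate.2 ⟨rfl, fun c hc => pow_prime_eq_one_iff.1 hρ c hc⟩
    have h2 := sum_cycleType ρ
    rw [h1, Multiset.sum_replicate] at h2
    rw [← h2]
    conv_lhs => rw [h1]
    simp
  rw [isConj_iff_cycleType_eq, key σ hσ, key τ hτ, h]

theorem fl_support (N f : ℕ) : (fl N f).support.card = 2 * N := by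
  have : (fl N f).support = Finset.univ.map Function.Embedding.inl := by
    ext x
    rcases x with ⟨b, i⟩ | j <;> simp [flF]
  rw [this]; simp

theorem fl_sq (N f : ℕ) : (fl N f) ^ 2 = 1 := by
  ext1 x
  rw [pow_two]
  exact flF_flF f x

def regCopies (L : Type) [Group L] (c f : ℕ) : L →* Perm ((Fin c × L) ⊕ Fin f) where
  toFun l := Equiv.sumCongr (Equiv.prodCongr (Equiv.refl _) (Equiv.mulLeft l)) (Equiv.refl _)
  map_one' := by ext1 x; rcases x with x | x <;> simp
  map_mul' a b := by ext1 x; rcases x with ⟨x1, x2⟩ | x <;> simp [mul_assoc]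

theorem regCopies_support (L : Type) [Group L] [Fintype L] [DecidableEq L] (c f : ℕ) (w : L) (hw : w ≠ 1) :
    (regCopies L c f w).support.card = c * Fintype.card L := by
  have : (regCopies L c f w).support = Finset.univ.map Function.Embedding.inl := by
    ext x
    rcases x with ⟨b, i⟩ | j <;> simp [regCopies, hw]
  rw [this]; simp

theorem regCopies_sign (L : Type) [Group L] [Fintype L] [DecidableEq L] (c f : ℕ) (w : L) (hc : Even c) :
    sign (regCopies L c f w) = 1 := by
  have : regCopies L c f w = Equiv.Perm.sumCongr (Equiv.prodCongrRight (fun _ : Fin c => Equiv.mulLeft w)) 1 := by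
    ext1 x; rcases x with ⟨x1, x2⟩ | x <;> simp [regCopies]
  rw [this, sign_sumCongr, sign_prodCongrRight]
  obtain ⟨k, rfl⟩ := hc
  simp only [Finset.prod_const, Finset.card_univ, Fintype.card_fin, Equiv.Perm.sign_one, mul_one, pow_add]
  exact Int.units_mul_self _

theorem sign_of_cube {α : Type*} [Fintype α] [DecidableEq α] (σ : Perm α) (h : σ ^ 3 = 1) : sign σ = 1 := by
  have := congrArg sign h
  rw [map_pow, map_one] at this
  rcases Int.units_eq_one_or (sign σ) with h | h
  · exact h
  · rw [h] at this; exact absurd this (by decide)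

theorem alt_quot (L : Type) [Group L] [Finite L] (w e : L) (hw1 : w ≠ 1) (hw2 : w ^ 2 = 1)
    (he1 : e ≠ 1) (he2 : e ^ 2 = 1) :
    ∃ m0, ∀ m ≥ m0, ∃ (φ : L →* alternatingGroup (Fin m)) (y : Fin 4 → alternatingGroup (Fin m))
      (h : alternatingGroup (Fin m)), (∀ i, y i ^ 3 = 1) ∧
      (∀ i, φ w * y i * (φ w)⁻¹ = (y i)⁻¹) ∧ h * φ w * h⁻¹ = φ e ∧
      Subgroup.closure (Set.range y) = ⊤ := by
  classical
  have := Fintype.ofFinite L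
  set d := Fintype.card L with hd
  have hdpos : 0 < d := Fintype.card_pos
  refine ⟨20 * d + 20, fun m hm => ?_⟩
  obtain ⟨c, f, hc, hf2, hfle⟩ : ∃ c f, m = 6 * c * d + f ∧ 2 ≤ f ∧ f ≤ 6 * d + 1 := by
    refine ⟨(m - 2) / (6 * d), (m - 2) % (6 * d) + 2, ?_, by omega, ?_⟩
    · have := Nat.div_add_mod (m - 2) (6 * d)
      have e : 6 * ((m - 2) / (6 * d)) * d = 6 * d * ((m - 2) / (6 * d)) := by ring
      omega
    · have := Nat.mod_lt (m - 2) (show 0 < 6 * d by omega)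
      omega
  set M := c * d with hM
  have hm' : m = 6 * M + f := by rw [hc, hM]; ring
  have hf : f ≤ 3 * M := by omega
  -- transport of the regular copies
  have hcard : Fintype.card ((Fin (6 * c) × L) ⊕ Fin f) = Fintype.card (YY (3 * M) f) := by
    simp only [Fintype.card_sum, Fintype.card_prod, Fintype.card_fin, Fintype.card_bool, ← hd, hM]
    ring
  let ε : ((Fin (6 * c) × L) ⊕ Fin f) ≃ YY (3 * M) f := Fintype.equivOfCardEq hcard
  let ψ : L →* Perm (YY (3 * M) f) := (ε.permCongrHom : _ ≃* _).toMonoidHom.comp (regCopies L (6 * c) f)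
  have ψdef : ∀ l, ψ l = ε.permCongr (regCopies L (6 * c) f l) := fun l => rfl
  have ψsign : ∀ l, sign (ψ l) = 1 := by
    intro l
    rw [ψdef, sign_permCongr]
    exact regCopies_sign L _ f l ⟨3 * c, by ring⟩
  have ψsupp : ∀ l, l ≠ 1 → (ψ l).support.card = 2 * (3 * M) := by
    intro l hl
    rw [ψdef]
    have : (ε.permCongr (regCopies L (6 * c) f l)).support.card = (regCopies L (6 * c) f l).support.card := by
      have : (ε.permCongr (regCopies L (6 * c) f l)).support = (regCopies L (6 * c) f l).support.map ε.toEmbedding := by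
        ext x
        simp only [mem_support, Finset.mem_map_equiv, Equiv.permCongr_apply, ne_eq]
        rw [Equiv.eq_symm_apply]
      rw [this, Finset.card_map]
    rw [this, regCopies_support L _ f l hl, hM, ← hd]
    ring
  have hfls := fl_support (3 * M) f
  have hψ2 : ∀ l, l ^ 2 = 1 → ψ l ^ 2 = 1 := fun l hl => by rw [← map_pow, hl, map_one]
  obtain ⟨k, hk⟩ := isConj_iff.1 (invol_isConj (ψ w) (fl _ f) (hψ2 w hw2) (fl_sq _ _) ((ψsupp w hw1).trans hfls.symm))
  let ψ' : L →* Perm (YY (3 * M) f) := (MulAut.conj k).toMonoidHom.comp ψ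
  have ψ'def : ∀ l, ψ' l = k * ψ l * k⁻¹ := fun l => rfl
  have ψ'w : ψ' w = fl _ f := hk
  have ψ'sign : ∀ l, sign (ψ' l) = 1 := by
    intro l; rw [ψ'def]; simp [ψsign]
  obtain ⟨h, hh⟩ : ∃ h, h * fl _ f * h⁻¹ = ψ' e := by
    refine isConj_iff.1 ((isConj_iff.2 ⟨k, hk⟩ : IsConj (ψ w) (fl _ f)).symm.trans ?_)
    exact (invol_isConj (ψ w) (ψ e) (hψ2 w hw2) (hψ2 e he2) ((ψsupp w hw1).trans (ψsupp e he1).symm)).trans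
      (isConj_iff.2 ⟨k, rfl⟩)
  obtain ⟨h', hh', hs'⟩ : ∃ h', h' * fl _ f * h'⁻¹ = ψ' e ∧ sign h' = 1 := by
    rcases Int.units_eq_one_or (sign h) with hs | hs
    · exact ⟨h, hh, hs⟩
    · let a : YY (3 * M) f := .inl (true, ⟨0, by omega⟩)
      let b : YY (3 * M) f := .inl (false, ⟨0, by omega⟩)
      have hab : a ≠ b := by simp [a, b]
      refine ⟨h * swap a b, ?_, ?_⟩
      · have : swap a b * fl _ f * (swap a b)⁻¹ = fl _ f := by
          rw [mul_inv_eq_iff_eq_mul, swap_mul_eq_mul_swap, fl_inv]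
          have e1 : fl _ f a = b := by simp [a, b, flF]
          have e2 : fl _ f b = a := by simp [a, b, flF]
          rw [e1, e2, swap_comm]
        calc h * swap a b * fl _ f * (h * swap a b)⁻¹ = h * (swap a b * fl _ f * (swap a b)⁻¹) * h⁻¹ := by group
          _ = _ := by rw [this, hh]
      · rw [map_mul, hs, sign_swap hab]; decide
  have hcm : Fintype.card (YY (3 * M) f) = Fintype.card (Fin m) := by
    simp only [Fintype.card_sum, Fintype.card_prod, Fintype.card_fin, Fintype.card_bool]
    omega
  let η : alternatingGroup (YY (3 * M) f) ≃* alternatingGroup (Fin m) :=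
    Equiv.altCongrHom (Fintype.equivOfCardEq hcm)
  let y0 : Fin 4 → alternatingGroup (YY (3 * M) f) := fun i =>
    ⟨ys M f hf i, mem_alternatingGroup.2 (sign_of_cube _ (ys_cube M f hf i))⟩
  let φ0 : L →* alternatingGroup (YY (3 * M) f) :=
    ψ'.codRestrict _ (fun l => mem_alternatingGroup.2 (ψ'sign l))
  let h0 : alternatingGroup (YY (3 * M) f) := ⟨h', mem_alternatingGroup.2 hs'⟩
  have p1 : ∀ i, y0 i ^ 3 = 1 := fun i => Subtype.ext (ys_cube M f hf i)
  have p2 : ∀ i, φ0 w * y0 i * (φ0 w)⁻¹ = (y0 i)⁻¹ := fun i => Subtype.ext (by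
    change ψ' w * ys M f hf i * (ψ' w)⁻¹ = (ys M f hf i)⁻¹
    rw [ψ'w, ys_fl])
  have p3 : h0 * φ0 w * h0⁻¹ = φ0 e := Subtype.ext (by
    change h' * ψ' w * h'⁻¹ = ψ' e
    rw [ψ'w, hh'])
  have p4 : Subgroup.closure (Set.range y0) = ⊤ := by
    apply Subgroup.map_injective (alternatingGroup (YY (3 * M) f)).subtype_injective
    rw [MonoidHom.map_closure, ← Set.range_comp]
    apply le_antisymm
    · rw [Subgroup.closure_le]
      rintro _ ⟨i, rfl⟩
      exact ⟨y0 i, trivial, rfl⟩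
    · rintro _ ⟨g, -, rfl⟩
      exact ys_alt M f hf hf2 g.2
  refine ⟨η.toMonoidHom.comp φ0, fun i => η (y0 i), η h0, ?_, ?_, ?_, ?_⟩
  · intro i; rw [← map_pow, p1, map_one]
  · intro i
    change η (φ0 w) * η (y0 i) * (η (φ0 w))⁻¹ = _
    have := congrArg η (p2 i)
    simpa only [map_mul, map_inv] using this
  · change η h0 * η (φ0 w) * (η h0)⁻¹ = η (φ0 e)
    have := congrArg η p3
    simpa only [map_mul, map_inv] using this
  · have := congrArg (Subgroup.map η.toMonoidHom) p4
    rw [MonoidHom.map_closure, ← Set.range_comp] at this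
    refine Eq.trans this ?_
    exact Subgroup.map_top_of_surjective _ η.surjective

end AltUndec

namespace AltUndec
section Encode
open Encodable

variable (X : Type) [Primcodable X]

def vld (c : ℕ) : Bool := encode (decode c : Option X) == c + 1

theorem vld_iff (c : ℕ) : vld X c = true ↔ c ∈ Set.range (encode : X → ℕ) := by
  rw [vld, beq_iff_eq]
  constructor
  · intro h
    cases hd : (decode c : Option X) with
    | none => rw [hd] at h; simp at h
    | some x => rw [hd] at h; simp at h; exact ⟨x, h⟩
  · rintro ⟨x, rfl⟩
    simp

theorem vld_prim : Primrec (vld X) := by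
  have h1 : Primrec (fun c : ℕ => encode (decode c : Option X)) := Primrec.nat_iff.2 (Primcodable.prim X)
  exact (Primrec.beq.comp h1 Primrec.succ).of_eq (fun c => rfl)

def rnk (c : ℕ) : ℕ := Nat.rec 0 (fun k r => if vld X k then r + 1 else r) c

theorem rnk_prim : Primrec (rnk X) := by
  refine Primrec.nat_rec₁ 0 ?_
  refine Primrec.ite (c := fun x : ℕ × ℕ => vld X x.1 = true) ?_ (Primrec.succ.comp Primrec.snd) Primrec.snd
  exact Primrec.eq.comp ((vld_prim X).comp Primrec.fst) (Primrec.const true)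

theorem rnk_eq (c : ℕ) [DecidablePred (· ∈ Set.range (encode : X → ℕ))] :
    rnk X c = (List.range c).countP (· ∈ Set.range (encode : X → ℕ)) := by
  induction c with
  | zero => rfl
  | succ c ih =>
    rw [List.range_succ, List.countP_append, ← ih]
    change (if vld X c then rnk X c + 1 else rnk X c) = _
    by_cases h : vld X c = true
    · have := (vld_iff X c).1 h
      rw [if_pos h, List.countP_singleton, if_pos (by simpa using this)]
    · have h' : c ∉ Set.range (encode : X → ℕ) := fun h2 => h ((vld_iff X c).2 h2)
      rw [if_neg h, List.countP_singleton, if_neg (by simpa using h'), Nat.add_zero]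

theorem inf_encode [Infinite X] (x : X) :
    @encode X (Denumerable.ofEncodableOfInfinite X).toEncodable x = rnk X (encode x) := by
  letI := @Encodable.decidableRangeEncode X _
  rw [rnk_eq]
  rfl

theorem inf_encode_comp [Infinite X] {L : ℕ → X} (hL : Primrec L) :
    Primrec (fun n => @encode X (Denumerable.ofEncodableOfInfinite X).toEncodable (L n)) :=
  ((rnk_prim X).comp (Primrec.encode.comp hL)).of_eq (fun n => (inf_encode X (L n)).symm)

end Encode

section Words
variable {α : Type} [Primcodable α]

def cw (a b : List (α × Bool)) : List (α × Bool) :=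
  a ++ b ++ (FreeGroup.invRev a ++ FreeGroup.invRev b)

def Fw (p q F0 : List (α × Bool)) (n : ℕ) : List (α × Bool) :=
  Nat.rec F0 (fun _ u => cw p (cw q u)) n

def relsOf (y : Fin 4 → List (α × Bool)) (h e w : List (α × Bool)) : List (List (α × Bool)) :=
  [w ++ y 0 ++ (FreeGroup.invRev w ++ y 0), w ++ y 1 ++ (FreeGroup.invRev w ++ y 1),
   w ++ y 2 ++ (FreeGroup.invRev w ++ y 2), w ++ y 3 ++ (FreeGroup.invRev w ++ y 3),
   h ++ w ++ (FreeGroup.invRev h ++ FreeGroup.invRev e)]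

theorem invRev_prim : Primrec (FreeGroup.invRev : List (α × Bool) → List (α × Bool)) := by
  refine Primrec.list_reverse.comp (Primrec.list_map Primrec.id ?_)
  exact Primrec.pair (Primrec.fst.comp Primrec.snd) (Primrec.not.comp (Primrec.snd.comp Primrec.snd))

theorem cw_prim : Primrec₂ (cw : List (α × Bool) → List (α × Bool) → List (α × Bool)) :=
  Primrec.list_append.comp (Primrec.list_append.comp Primrec.fst Primrec.snd)
    (Primrec.list_append.comp (invRev_prim.comp Primrec.fst) (invRev_prim.comp Primrec.snd))

theorem Fw_prim (p q F0 : List (α × Bool)) : Primrec (Fw p q F0) := by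
  refine Primrec.nat_rec₁ F0 ?_
  exact cw_prim.comp (Primrec.const p) (cw_prim.comp (Primrec.const q) Primrec.snd)

theorem list_prim (L0 : List (List (α × Bool))) (y : Fin 4 → List (α × Bool))
    (h e p q F0 r : List (α × Bool)) :
    Primrec (fun n => L0 ++ relsOf y h e (cw r (Fw p q F0 n))) := by
  have hw : Primrec (fun n => cw r (Fw p q F0 n)) := cw_prim.comp (Primrec.const r) (Fw_prim p q F0)
  have hy : ∀ i, Primrec (fun n => cw r (Fw p q F0 n) ++ y i ++ (FreeGroup.invRev (cw r (Fw p q F0 n)) ++ y i)) := fun i =>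
    Primrec.list_append.comp (Primrec.list_append.comp hw (Primrec.const _))
      (Primrec.list_append.comp (invRev_prim.comp hw) (Primrec.const _))
  refine Primrec.list_append.comp (Primrec.const L0) ?_
  refine Primrec.list_cons.comp (hy 0) (Primrec.list_cons.comp (hy 1) (Primrec.list_cons.comp (hy 2)
    (Primrec.list_cons.comp (hy 3) (Primrec.list_cons.comp ?_ (Primrec.const [])))))
  exact Primrec.list_append.comp (Primrec.list_append.comp (Primrec.const h) hw) (Primrec.const _)

end Words

section Insep
open Nat.Partrec

theorem insep : ∃ f : ℕ →. ℕ, Nat.Partrec f ∧ ∀ P : ℕ → Prop, ComputablePred P →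
    (∀ n, 0 ∈ f n → ¬ P n) → (∀ n, 1 ∈ f n → P n) → False := by
  refine ⟨fun n => Code.eval (Denumerable.ofNat Code n) n, ?_, ?_⟩
  · have : Partrec (fun n : ℕ => Code.eval (Denumerable.ofNat Code n) n) :=
      Code.eval_part.comp (Computable.ofNat Code) Computable.id
    exact Partrec.nat_iff.1 this
  · intro P hP h0 h1
    obtain ⟨_, hP⟩ := hP
    have hg : Computable (fun n => if P n then 0 else 1 : ℕ → ℕ) :=
      (Computable.cond hP (Computable.const 0) (Computable.const 1)).of_eq (fun n => by
        by_cases h : P n <;> simp [h])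
    obtain ⟨c, hc⟩ := Code.exists_code.1 (Partrec.nat_iff.1 hg.partrec)
    have := congrFun hc (Encodable.encode c)
    have e : Denumerable.ofNat Code (Encodable.encode c) = c := Denumerable.ofNat_encode c
    by_cases h : P (Encodable.encode c)
    · refine h0 (Encodable.encode c) ?_ h
      simp only [e, this]
      simp [h]
    · refine h (h1 (Encodable.encode c) ?_)
      simp only [e, this]
      simp [h]

end Insep
end AltUndec

namespace AltUndec

theorem sigma_comp (s : ℕ) {L : ℕ → List (List (Fin s × Bool))}
    (hL : @Primrec ℕ (List (List (Fin s × Bool))) _ (@Primcodable.list _ (@Primcodable.list _ _)) L) :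
    Computable (fun n => (⟨s, L n⟩ : Σ s : ℕ, List (List (Fin s × Bool)))) := by
  have h1 := @inf_encode_comp (List (List (Fin s × Bool))) (@Primcodable.list _ (@Primcodable.list _ _)) _ L hL
  have h2 := Primrec₂.natPair.comp (Primrec.const s) h1
  refine Computable.encode_iff.1 (h2.to_comp.of_eq ?_)
  intro n
  rfl

end AltUndec

open scoped commutatorElement
namespace AltUndec

theorem pres_hom' {α : Type} (rels : Set (FreeGroup α)) (H : Type) [Group H] :
    (∃ φ : PresentedGroup rels →* H, Function.Surjective φ) ↔
    ∃ Φ : FreeGroup α →* H, (∀ r ∈ rels, Φ r = 1) ∧ Function.Surjective Φ := by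
  constructor
  · rintro ⟨φ, hφ⟩
    refine ⟨φ.comp (PresentedGroup.mk rels), ?_, hφ.comp (PresentedGroup.mk_surjective rels)⟩
    intro r hr
    rw [MonoidHom.comp_apply, PresentedGroup.one_of_mem hr, map_one]
  · rintro ⟨Φ, h1, h2⟩
    have e : Φ = FreeGroup.lift (fun a => Φ (FreeGroup.of a)) := by
      ext a; simp
    refine ⟨PresentedGroup.toGroup (f := fun a => Φ (FreeGroup.of a)) (fun r hr => by rw [← e]; exact h1 r hr), ?_⟩
    intro x
    obtain ⟨y, rfl⟩ := h2 x
    refine ⟨PresentedGroup.mk rels y, ?_⟩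
    conv_rhs => rw [e]
    rfl

theorem pres_hom (p : Σ s : ℕ, List (List (Fin s × Bool))) (H : Type) [Group H] :
    (∃ φ : presentedGroupOf p →* H, Function.Surjective φ) ↔
    ∃ Φ : FreeGroup (Fin p.1) →* H, (∀ w ∈ p.2, Φ (FreeGroup.mk w) = 1) ∧ Function.Surjective Φ := by
  refine Iff.trans (pres_hom' {x : FreeGroup (Fin p.1) | ∃ w ∈ p.2, x = FreeGroup.mk w} H) ?_
  constructor
  · rintro ⟨Φ, h1, h2⟩
    exact ⟨Φ, fun w hw => h1 _ ⟨w, hw, rfl⟩, h2⟩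
  · rintro ⟨Φ, h1, h2⟩
    refine ⟨Φ, ?_, h2⟩
    rintro _ ⟨w, hw, rfl⟩
    exact h1 w hw

section Base
variable {A : Type} {G : Type} [Group G]

inductive BaseRel (Rul : List A → List A → Prop) (acc : A) (g : Fin 5 → Fin 5 → Option A → G)
    (y : Fin 4 → G) : G → Prop
  | s1 (i j k l a b) : i ≠ j → k ≠ l → j ≠ k → i ≠ l → BaseRel Rul acc g y ⁅g i j a, g k l b⁆
  | s2 (i k j a) : i ≠ k → k ≠ j → i ≠ j → BaseRel Rul acc g y (⁅g i k a, g k j none⁆ * (g i j a)⁻¹)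
  | s3 (i k j a) : i ≠ k → k ≠ j → i ≠ j → BaseRel Rul acc g y (⁅g i k none, g k j a⁆ * (g i j a)⁻¹)
  | rule (l r i j) : Rul l r → i ≠ j → BaseRel Rul acc g y (EE g l i j * (EE g r i j)⁻¹)
  | acc (i j) : i ≠ j → BaseRel Rul acc g y (g i j (some acc))
  | diag (i a) : BaseRel Rul acc g y (g i i a)
  | cube (k) : BaseRel Rul acc g y (y k ^ 3)

theorem baseRel_finite [Finite A] (Rul : List A → List A → Prop) (acc : A)
    (hR : ∀ l r, Rul l r → l.length ≤ 3 ∧ r.length ≤ 3)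
    (g : Fin 5 → Fin 5 → Option A → G) (y : Fin 4 → G) : {x | BaseRel Rul acc g y x}.Finite := by
  have hl : {l : List A | l.length ≤ 3}.Finite := List.finite_length_le A 3
  have := hl.to_subtype
  let W := {l : List A | l.length ≤ 3}
  let S1 : Set G := Set.range (fun p : Fin 5 × Fin 5 × Fin 5 × Fin 5 × Option A × Option A =>
    ⁅g p.1 p.2.1 p.2.2.2.2.1, g p.2.2.1 p.2.2.2.1 p.2.2.2.2.2⁆)
  let S2 : Set G := Set.range (fun p : Fin 5 × Fin 5 × Fin 5 × Option A =>
    ⁅g p.1 p.2.1 p.2.2.2, g p.2.1 p.2.2.1 none⁆ * (g p.1 p.2.2.1 p.2.2.2)⁻¹)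
  let S3 : Set G := Set.range (fun p : Fin 5 × Fin 5 × Fin 5 × Option A =>
    ⁅g p.1 p.2.1 none, g p.2.1 p.2.2.1 p.2.2.2⁆ * (g p.1 p.2.2.1 p.2.2.2)⁻¹)
  let S4 : Set G := Set.range (fun p : W × W × Fin 5 × Fin 5 =>
    EE g p.1.1 p.2.2.1 p.2.2.2 * (EE g p.2.1.1 p.2.2.1 p.2.2.2)⁻¹)
  let S5 : Set G := Set.range (fun p : Fin 5 × Fin 5 × Option A => g p.1 p.2.1 p.2.2)
  let S6 : Set G := Set.range (fun k => y k ^ 3)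
  have hfin : (S1 ∪ (S2 ∪ (S3 ∪ (S4 ∪ (S5 ∪ S6))))).Finite :=
    (Set.finite_range _).union ((Set.finite_range _).union ((Set.finite_range _).union
      ((Set.finite_range _).union ((Set.finite_range _).union (Set.finite_range _)))))
  refine hfin.subset ?_
  intro x hx
  cases hx with
  | s1 i j k l a b => exact Or.inl ⟨(i, j, k, l, a, b), rfl⟩
  | s2 i k j a => exact Or.inr (Or.inl ⟨(i, k, j, a), rfl⟩)
  | s3 i k j a => exact Or.inr (Or.inr (Or.inl ⟨(i, k, j, a), rfl⟩))
  | rule l r i j h =>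
    exact Or.inr (Or.inr (Or.inr (Or.inl ⟨(⟨l, (hR l r h).1⟩, ⟨r, (hR l r h).2⟩, i, j), rfl⟩)))
  | acc i j => exact Or.inr (Or.inr (Or.inr (Or.inr (Or.inl ⟨(i, j, _), rfl⟩))))
  | diag i a => exact Or.inr (Or.inr (Or.inr (Or.inr (Or.inl ⟨(i, i, a), rfl⟩))))
  | cube k => exact Or.inr (Or.inr (Or.inr (Or.inr (Or.inr ⟨k, rfl⟩))))

theorem EE_map {H : Type} [Group H] (φ : G →* H) (g : Fin 5 → Fin 5 → Option A → G) (u : List A) :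
    ∀ i j, φ (EE g u i j) = EE (fun i j a => φ (g i j a)) u i j := by
  induction u with
  | nil => intro i j; rfl
  | cons s u ih =>
    intro i j
    simp only [EE, map_commutatorElement, ih]

theorem baseRel_hom {H : Type} [Group H] (φ : G →* H) (Rul : List A → List A → Prop) (acc : A)
    (g : Fin 5 → Fin 5 → Option A → G) (y : Fin 4 → G) :
    (∀ x, BaseRel Rul acc g y x → φ x = 1) ↔
      (SteinRel (fun i j a => φ (g i j a)) ∧
      (∀ l r, Rul l r → ∀ i j, i ≠ j → EE (fun i j a => φ (g i j a)) l i j = EE (fun i j a => φ (g i j a)) r i j) ∧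
      (∀ i j, i ≠ j → φ (g i j (some acc)) = 1) ∧ (∀ i a, φ (g i i a) = 1) ∧ (∀ k, φ (y k) ^ 3 = 1)) := by
  constructor
  · intro h
    refine ⟨⟨?_, ?_, ?_⟩, ?_, ?_, ?_, ?_⟩
    · intro i j k l a b h1 h2 h3 h4
      have := h _ (BaseRel.s1 i j k l a b h1 h2 h3 h4)
      rwa [map_commutatorElement, commutatorElement_eq_one_iff_commute] at this
    · intro i k j a h1 h2 h3
      have := h _ (BaseRel.s2 i k j a h1 h2 h3)
      rwa [map_mul, map_inv, map_commutatorElement, mul_inv_eq_one] at this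
    · intro i k j a h1 h2 h3
      have := h _ (BaseRel.s3 i k j a h1 h2 h3)
      rwa [map_mul, map_inv, map_commutatorElement, mul_inv_eq_one] at this
    · intro l r hlr i j hij
      have := h _ (BaseRel.rule l r i j hlr hij)
      rwa [map_mul, map_inv, EE_map, EE_map, mul_inv_eq_one] at this
    · intro i j hij; exact h _ (BaseRel.acc i j hij)
    · intro i a; exact h _ (BaseRel.diag i a)
    · intro k; rw [← map_pow]; exact h _ (BaseRel.cube k)
  · rintro ⟨h, hr, ha, hd, hc⟩ x hx
    cases hx with
    | s1 i j k l a b h1 h2 h3 h4 =>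
      rw [map_commutatorElement, commutatorElement_eq_one_iff_commute]
      exact h.s1 i j k l a b h1 h2 h3 h4
    | s2 i k j a h1 h2 h3 =>
      rw [map_mul, map_inv, map_commutatorElement, mul_inv_eq_one]
      exact h.s2 i k j a h1 h2 h3
    | s3 i k j a h1 h2 h3 =>
      rw [map_mul, map_inv, map_commutatorElement, mul_inv_eq_one]
      exact h.s3 i k j a h1 h2 h3
    | rule l r i j h1 h2 =>
      rw [map_mul, map_inv, EE_map, EE_map, mul_inv_eq_one]
      exact hr l r h1 i j h2
    | acc i j h1 => exact ha i j h1
    | diag i a => exact hd i a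
    | cube k => rw [map_pow]; exact hc k

theorem stein_trivial {g : Fin 5 → Fin 5 → Option A → G} (h : SteinRel g) (h01 : g 0 1 none = 1) :
    ∀ i j a, i ≠ j → g i j a = 1 := by
  have a1 : ∀ i a, i ≠ 1 → i ≠ 0 → g i 1 a = 1 := by
    intro i a h1 h0
    rw [← h.s2 i 0 1 a h0 (by decide) h1, h01, commutatorElement_one_right]
  have a2 : ∀ i, i ≠ 1 → g i 1 none = 1 := by
    intro i h1
    by_cases h0 : i = 0
    · rw [h0, h01]
    · exact a1 i none h1 h0
  have a3 : ∀ i j a, i ≠ j → i ≠ 1 → j ≠ 1 → g i j a = 1 := by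
    intro i j a hij hi hj
    rw [← h.s3 i 1 j a hi hj.symm hij, a2 i hi, commutatorElement_one_left]
  intro i j a hij
  by_cases hi : i = 1
  · subst hi
    obtain ⟨k, hk1, hk2, -⟩ := exists_avoid 1 j j j
    rw [← h.s2 1 k j a hk1.symm hk2 hij, a3 k j none hk2 hk1 hij.symm, commutatorElement_one_right]
  · by_cases hj : j = 1
    · subst hj
      obtain ⟨k, hk1, hk2, -⟩ := exists_avoid 1 i i i
      rw [← h.s2 i k 1 a hk2.symm hk1 hij, a2 k hk1, commutatorElement_one_right]
    · exact a3 i j a hij hi hj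

end Base

theorem mk_cw {α : Type} (a b : List (α × Bool)) :
    FreeGroup.mk (cw a b) = ⁅FreeGroup.mk a, FreeGroup.mk b⁆ := by
  rw [commutatorElement_def, FreeGroup.inv_mk, FreeGroup.inv_mk, cw, FreeGroup.mul_mk, FreeGroup.mul_mk,
    FreeGroup.mul_mk, List.append_assoc (a ++ b)]

theorem mk_word {T : Type} {R : ℕ} {α H : Type} [DecidableEq α] [Group H] (gF : Fin 5 → Fin 5 → Option (LL T R) → FreeGroup α)
    (Φ : FreeGroup α →* H) (hS : SteinRel (fun i j a => Φ (gF i j a))) (q : T) (n : ℕ) :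
    Φ (FreeGroup.mk (cw (gF 0 1 (some (.st q))).toWord
      (Fw (gF 1 0 (some (.x 0))).toWord (gF 0 1 none).toWord
        (EE gF ((List.finRange (R + 1)).map .b) 1 2).toWord n))) =
      EE (fun i j a => Φ (gF i j a)) (W0 q n) 0 2 := by
  have hF : Φ (FreeGroup.mk (Fw (gF 1 0 (some (.x 0))).toWord (gF 0 1 none).toWord
        (EE gF ((List.finRange (R + 1)).map .b) 1 2).toWord n)) =
      EE (fun i j a => Φ (gF i j a)) (List.replicate n (.x 0) ++ (List.finRange (R + 1)).map .b) 1 2 := by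
    induction n with
    | zero =>
      change Φ (FreeGroup.mk (EE gF ((List.finRange (R + 1)).map .b) 1 2).toWord) = _
      rw [FreeGroup.mk_toWord, EE_map]
      rfl
    | succ n ih =>
      change Φ (FreeGroup.mk (cw (gF 1 0 (some (.x 0))).toWord (cw (gF 0 1 none).toWord (Fw (gF 1 0 (some (.x 0))).toWord (gF 0 1 none).toWord
        (EE gF ((List.finRange (R + 1)).map .b) 1 2).toWord n)))) = _
      rw [mk_cw, mk_cw, map_commutatorElement, map_commutatorElement, ih, FreeGroup.mk_toWord, FreeGroup.mk_toWord]
      have e1 := EE_mul hS [] (List.replicate n (.x 0) ++ (List.finRange (R + 1)).map .b) 0 1 2 (by decide) (by decide) (by decide)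
      have e2 := EE_mul hS [.x 0] (List.replicate n (.x 0) ++ (List.finRange (R + 1)).map .b) 1 0 2 (by decide) (by decide) (by decide)
      rw [EE_single hS _ _ _ (by decide)] at e2
      rw [List.nil_append] at e1
      rw [← e1] at e2
      exact e2
  rw [mk_cw, map_commutatorElement, hF, FreeGroup.mk_toWord]
  have e2 := EE_mul hS [.st q] (List.replicate n (.x 0) ++ (List.finRange (R + 1)).map .b) 0 1 2 (by decide) (by decide) (by decide)
  rw [EE_single hS _ _ _ (by decide)] at e2
  exact e2

theorem relsOf_hom {α H : Type} [Group H] (Φ : FreeGroup α →* H) (y : Fin 4 → List (α × Bool))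
    (h e w : List (α × Bool)) :
    (∀ v ∈ relsOf y h e w, Φ (FreeGroup.mk v) = 1) ↔
      (∀ k, Φ (FreeGroup.mk w) * Φ (FreeGroup.mk (y k)) * (Φ (FreeGroup.mk w))⁻¹ = (Φ (FreeGroup.mk (y k)))⁻¹) ∧
      Φ (FreeGroup.mk h) * Φ (FreeGroup.mk w) * (Φ (FreeGroup.mk h))⁻¹ = Φ (FreeGroup.mk e) := by
  have e1 : ∀ u, Φ (FreeGroup.mk (w ++ u ++ (FreeGroup.invRev w ++ u))) = 1 ↔
      Φ (FreeGroup.mk w) * Φ (FreeGroup.mk u) * (Φ (FreeGroup.mk w))⁻¹ = (Φ (FreeGroup.mk u))⁻¹ := by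
    intro u
    rw [← FreeGroup.mul_mk, ← FreeGroup.mul_mk, ← FreeGroup.mul_mk, ← FreeGroup.inv_mk, map_mul, map_mul,
      map_mul, map_inv, eq_inv_iff_mul_eq_one, mul_assoc _ _ (Φ (FreeGroup.mk u)), mul_assoc]
  have e2 : Φ (FreeGroup.mk (h ++ w ++ (FreeGroup.invRev h ++ FreeGroup.invRev e))) = 1 ↔
      Φ (FreeGroup.mk h) * Φ (FreeGroup.mk w) * (Φ (FreeGroup.mk h))⁻¹ = Φ (FreeGroup.mk e) := by
    rw [← FreeGroup.mul_mk, ← FreeGroup.mul_mk, ← FreeGroup.mul_mk, ← FreeGroup.inv_mk, ← FreeGroup.inv_mk,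
      map_mul, map_mul, map_mul, map_inv, map_inv, ← mul_assoc, mul_inv_eq_one]
  simp only [relsOf, List.mem_cons, List.not_mem_nil, or_false, forall_eq_or_imp, forall_eq, e1, e2]
  rw [Fin.forall_fin_succ, Fin.forall_fin_succ, Fin.forall_fin_succ, Fin.forall_fin_one]
  simp only [and_assoc]
  rfl

end AltUndec

open scoped commutatorElement
namespace AltUndec

abbrev Gen (A : Type) := (Fin 5 × Fin 5 × Option A) ⊕ (Fin 4 ⊕ Unit)

theorem exists_pres (T : Type) [Finite T] (R : ℕ) (δ : T → Instr T (Fin (R + 1))) (start acc rej : T)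
    (hne : acc ≠ rej) (hacc : δ acc = .halt) (hrej : δ rej = .halt) :
    ∃ (s : ℕ) (L : ℕ → List (List (Fin s × Bool))),
      Computable (fun n => (⟨s, L n⟩ : Σ s : ℕ, List (List (Fin s × Bool)))) ∧
      (∀ n ρ, Relation.ReflTransGen (MStep δ) (start, Pi.single 0 n) (acc, ρ) → ∀ m ≥ 5,
        ¬ ∃ φ : presentedGroupOf ⟨s, L n⟩ →* alternatingGroup (Fin m), Function.Surjective φ) ∧
      (∀ n ρ, Relation.ReflTransGen (MStep δ) (start, Pi.single 0 n) (rej, ρ) → ∃ m0, ∀ m ≥ m0,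
        ∃ φ : presentedGroupOf ⟨s, L n⟩ →* alternatingGroup (Fin m), Function.Surjective φ) := by
  classical
  obtain ⟨s, ⟨ε⟩⟩ := Finite.exists_equiv_fin (Gen (LL T R))
  let gF : Fin 5 → Fin 5 → Option (LL T R) → FreeGroup (Fin s) := fun i j a =>
    FreeGroup.of (ε (.inl (i, j, a)))
  let yF : Fin 4 → FreeGroup (Fin s) := fun k => FreeGroup.of (ε (.inr (.inl k)))
  let hF : FreeGroup (Fin s) := FreeGroup.of (ε (.inr (.inr ())))
  have hfin := baseRel_finite (Rule δ) (.st acc) (fun l r h => rule_length h) gF yF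
  let L0 : List (List (Fin s × Bool)) := hfin.toFinset.toList.map FreeGroup.toWord
  have hL0 : ∀ {H : Type} [Group H] (Φ : FreeGroup (Fin s) →* H), (∀ v ∈ L0, Φ (FreeGroup.mk v) = 1) ↔
      ∀ x, BaseRel (Rule δ) (.st acc) gF yF x → Φ x = 1 := by
    intro H _ Φ
    simp only [L0, List.mem_map, Finset.mem_toList, Set.Finite.mem_toFinset, Set.mem_setOf_eq,
      forall_exists_index, and_imp, forall_apply_eq_imp_iff₂, FreeGroup.mk_toWord]
  let wd : ℕ → List (Fin s × Bool) := fun n => cw (gF 0 1 (some (.st start))).toWord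
      (Fw (gF 1 0 (some (.x 0))).toWord (gF 0 1 none).toWord
        (EE gF ((List.finRange (R + 1)).map .b) 1 2).toWord n)
  let L : ℕ → List (List (Fin s × Bool)) := fun n =>
    L0 ++ relsOf (fun k => (yF k).toWord) hF.toWord (gF 0 1 none).toWord (wd n)
  have hLhom : ∀ {H : Type} [Group H] (Φ : FreeGroup (Fin s) →* H) (n : ℕ), (∀ v ∈ L n, Φ (FreeGroup.mk v) = 1) ↔
      (∀ x, BaseRel (Rule δ) (.st acc) gF yF x → Φ x = 1) ∧
      (∀ k, Φ (FreeGroup.mk (wd n)) * Φ (yF k) * (Φ (FreeGroup.mk (wd n)))⁻¹ = (Φ (yF k))⁻¹) ∧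
      Φ hF * Φ (FreeGroup.mk (wd n)) * (Φ hF)⁻¹ = Φ (gF 0 1 none) := by
    intro H _ Φ n
    rw [← hL0 Φ]
    simp only [L, List.forall_mem_append]
    rw [relsOf_hom]
    simp only [FreeGroup.mk_toWord]
  refine ⟨s, L, sigma_comp s (list_prim L0 _ _ _ _ _ _ _), ?_, ?_⟩
  · intro n ρ hreach m hm hex
    rw [pres_hom] at hex
    obtain ⟨Φ, hΦ, hsurj⟩ := hex
    obtain ⟨hb, hy, hh⟩ := (hLhom Φ n).1 hΦ
    obtain ⟨hS, hr, ha, hd, hc⟩ := (baseRel_hom Φ _ _ _ _).1 hb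
    have hw : Φ (FreeGroup.mk (wd n)) = 1 := by
      rw [mk_word gF Φ hS start n]
      exact accept_EE hS hr acc ha start n ρ hreach 0 2 (by decide)
    have hy1 : ∀ k, Φ (yF k) = 1 := by
      intro k
      have e1 := hy k
      rw [hw, one_mul, inv_one, mul_one, eq_inv_iff_mul_eq_one] at e1
      have e2 := hc k
      rwa [pow_succ, pow_two, e1, one_mul] at e2
    have he : Φ (gF 0 1 none) = 1 := by
      rw [← hh, hw]; simp
    have hg : ∀ i j a, Φ (gF i j a) = 1 := by
      intro i j a
      by_cases hij : i = j
      · subst hij; exact hd i a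
      · exact stein_trivial hS he i j a hij
    have hrange : ∀ x, Φ x ∈ Subgroup.zpowers (Φ hF) := by
      intro x
      induction x using FreeGroup.induction_on with
      | C1 => rw [map_one]; exact one_mem _
      | of a =>
        obtain ⟨b, rfl⟩ := ε.surjective a
        rcases b with ⟨i, j, a⟩ | k | u
        · change Φ (gF i j a) ∈ _
          rw [hg]; exact one_mem _
        · change Φ (yF k) ∈ _
          rw [hy1]; exact one_mem _
        · exact Subgroup.mem_zpowers (Φ hF)
      | inv_of a h => rw [map_inv]; exact inv_mem h
      | mul a b h1 h2 => rw [map_mul]; exact mul_mem h1 h2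
    have hcomm : ∀ a b : alternatingGroup (Fin m), a * b = b * a := by
      intro a b
      obtain ⟨x, rfl⟩ := hsurj a
      obtain ⟨y, rfl⟩ := hsurj b
      obtain ⟨p, hp⟩ := Subgroup.mem_zpowers_iff.1 (hrange x)
      obtain ⟨q, hq⟩ := Subgroup.mem_zpowers_iff.1 (hrange y)
      rw [← hp, ← hq, ← zpow_add, ← zpow_add, add_comm]
    have hcb := alternatingGroup.center_eq_bot (α := Fin m) (by simp; omega)
    have htriv : ∀ a : alternatingGroup (Fin m), a = 1 := by
      intro a
      have : a ∈ Subgroup.center (alternatingGroup (Fin m)) :=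
        Subgroup.mem_center_iff.2 (fun b => hcomm b a)
      rw [hcb] at this
      exact Subgroup.mem_bot.1 this
    have : Nontrivial (alternatingGroup (Fin m)) :=
      alternatingGroup.nontrivial_of_three_le_card (by simp; omega)
    obtain ⟨a, b, hab⟩ := this
    exact hab ((htriv a).trans (htriv b).symm)
  · intro n ρ hreach
    obtain ⟨K, hK⟩ := W0_mem hreach
    obtain ⟨Q, _, _, g, hS, hr, ha, hd, hne1⟩ := exists_model (Lang δ (rej, ρ) K) (Lang_finite _ K) _ hK (Rule δ)
      (fun l r h u v => Lang_sat (rej, ρ) K hrej h u v) (.st acc)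
      (fun u v => Lang_acc (rej, ρ) K acc hne hacc u v)
    obtain ⟨m0, hm0⟩ := alt_quot Q (EE g (W0 start n) 0 2) (g 0 1 none) (hne1 0 2 (by decide)).1
      (hne1 0 2 (by decide)).2.1 (hne1 0 1 (by decide)).2.2.1 (hne1 0 1 (by decide)).2.2.2
    refine ⟨m0, fun m hm => ?_⟩
    obtain ⟨φ, y, h, hy3, hyw, hhw, hcl⟩ := hm0 m hm
    rw [pres_hom]
    let v : Gen (LL T R) → alternatingGroup (Fin m) :=
      Sum.elim (fun p => φ (g p.1 p.2.1 p.2.2)) (Sum.elim y (fun _ => h))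
    let Φ : FreeGroup (Fin s) →* alternatingGroup (Fin m) := FreeGroup.lift (fun a => v (ε.symm a))
    have Φg : ∀ i j a, Φ (gF i j a) = φ (g i j a) := fun i j a => by simp [Φ, gF, v]
    have Φy : ∀ k, Φ (yF k) = y k := fun k => by simp [Φ, yF, v]
    have Φh : Φ hF = h := by simp [Φ, hF, v]
    have hgφ := (baseRel_hom φ (Rule δ) (.st acc) g (fun _ => 1)).1 (by
      have := (baseRel_hom (MonoidHom.id Q) (Rule δ) (.st acc) g (fun _ => 1)).2
        ⟨hS, hr, ha, hd, fun k => by simp⟩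
      intro x hx
      have e := this x hx
      rw [MonoidHom.id_apply] at e
      rw [e, map_one])
    obtain ⟨hS', hr', ha', hd', -⟩ := hgφ
    have hfun : (fun i j a => Φ (gF i j a)) = (fun i j a => φ (g i j a)) := by
      funext i j a; exact Φg i j a
    have hSΦ : SteinRel (fun i j a => Φ (gF i j a)) := by rw [hfun]; exact hS'
    have hwd : Φ (FreeGroup.mk (wd n)) = φ (EE g (W0 start n) 0 2) := by
      rw [mk_word gF Φ hSΦ start n, hfun, EE_map]
    refine ⟨Φ, (hLhom Φ n).2 ⟨?_, ?_, ?_⟩, ?_⟩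
    · rw [baseRel_hom, hfun]
      refine ⟨hS', hr', ?_, ?_, ?_⟩
      · intro i j hij; rw [Φg]; exact ha' i j hij
      · intro i a; rw [Φg]; exact hd' i a
      · intro k; rw [Φy]; exact hy3 k
    · intro k
      rw [hwd, Φy]; exact hyw k
    · rw [hwd, Φh, Φg]; exact hhw
    · rw [← MonoidHom.range_eq_top, eq_top_iff, ← hcl, Subgroup.closure_le]
      rintro _ ⟨k, rfl⟩
      exact ⟨yF k, Φy k⟩

end AltUndec

/-- Theorem 1(i) for an infinite family of alternating groups: there is no algorithm that,
given a finite presentation, decides whether the group presented has a quotient isomorphic to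
`Alt(n)` for some `n ∈ S`. -/
theorem stmt_4 (S : Set ℕ) (hS : S.Infinite) (hS5 : ∀ n ∈ S, 5 ≤ n) :
    ¬ ComputablePred (fun p : Σ s : ℕ, List (List (Fin s × Bool)) =>
        ∃ n ∈ S, ∃ φ : presentedGroupOf p →* alternatingGroup (Fin n),
          Function.Surjective φ) := by
  intro hP
  obtain ⟨f, hf, hins⟩ := AltUndec.insep
  obtain ⟨T, _, R, δ, start, acc, rej, hne, hacc, hrej, h0, h1⟩ := AltUndec.exists_machine f hf
  obtain ⟨s, L, hL, hA, hR⟩ := AltUndec.exists_pres T R δ start acc rej hne hacc hrej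
  refine hins (fun n => ∃ m ∈ S, ∃ φ : presentedGroupOf ⟨s, L n⟩ →* alternatingGroup (Fin m),
    Function.Surjective φ) ?_ ?_ ?_
  · exact ComputablePred.computable_of_manyOneReducible ⟨_, hL, fun n => Iff.rfl⟩ hP
  · rintro n hn ⟨m, hm, hφ⟩
    obtain ⟨ρ, hρ⟩ := h0 n hn
    exact hA n ρ hρ m (hS5 m hm) hφ
  · intro n hn
    obtain ⟨ρ, hρ⟩ := h1 n hn
    obtain ⟨m0, hm0⟩ := hR n ρ hρ
    obtain ⟨m, hm, hlt⟩ := hS.exists_gt m0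
    exact ⟨m, hm, hm0 m hlt.le⟩
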